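/- arXiv:2502.11016 — 4 statements merged into one kernel-verified Lean document; each statement's English description precedes it below -/
import Mathlib

section
/- Let x : ℤ → ℝⁿ be a solution of model (1) with initial time σ ∈ ℕ and bounded initial condition. If hypotheses (H1)–(H5) and (H6) hold and the matrix M̂ is an M-matrix, then |x(m)| → 0 as m → ∞ (in the max norm on ℝⁿ). (Theorem 3.1, item i.) -/
/-! The idea is to compare the vector `L` of the limsups `L j = limsup |x_j|` with the M-matrix `M̂`.

The activation functions are bounded and `|a_i| ≤ a_i⁺ < 1`, so the solution is bounded and `L` is
finite. By compactness of `[-L j, L j]`, the activation condition gives that the limsup of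
`|f_{ijp}(x_j)|` is at most some `r ≤ F_{ijp} L j`, with strict inequality when `L j > 0`
(`exists_activation_limsup`); the delays do not matter because they tend to infinity, and the
infinite distributed delay does not increase limsups because its kernel has total mass `1`
(`EvLe.convolution`). Passing to the limsup in the model, at each `i` with `L i > 0`,
`(1 - â_i) L i ≤ ∑ (b̂ r + ĉ r') < ∑ (b̂ F + ĉ G) L j`: the left side is positive, so some term on
the right is positive, and that term has made the comparison strict. Thus `(M̂ L)_i < 0`
on the support of the nonnegative vector `L`.

An M-matrix admits no such vector unless `L = 0` (`IsMMatrix.eq_zero_of_mulVec_neg`): for small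
`ε > 0` the matrix `M̂ + ε` has positive principal minors and `(M̂ + ε)(-L)` is nonnegative on the
support of `L`. Inverse positivity of `M̂ + ε` on the support, proved by adding one row at a time
with Cramer's rule (`nonneg_of_minorMatrix_mulVec_nonneg`), gives `-L ≥ 0`.
-/

/-- A real square matrix with non-positive off-diagonal entries is an `M`-matrix
if all its principal minors are nonnegative. -/
def IsMMatrix {n : ℕ} (A : Matrix (Fin n) (Fin n) ℝ) : Prop :=
  (∀ i j, i ≠ j → A i j ≤ 0) ∧
  ∀ s : Finset (Fin n),
    0 ≤ (A.submatrix (fun i : s => (i : Fin n)) (fun j : s => (j : Fin n))).det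

/-! ### M-matrices -/

/-- The rows of `A` indexed by `s`, with `ε` added to the diagonal entries indexed by `t`, and the
rows of the identity matrix outside `s`. For `t = ∅` its determinant is the principal minor of `A`
on `s`; keeping the full index type avoids determinants over subtypes. -/
noncomputable def minorMatrix {n : ℕ} (A : Matrix (Fin n) (Fin n) ℝ) (ε : ℝ)
    (t s : Finset (Fin n)) : Matrix (Fin n) (Fin n) ℝ :=
  fun i => if i ∈ s then A i + (if i ∈ t then Pi.single i ε else 0) else Pi.single i 1

theorem det_minorMatrix_empty {n : ℕ} (A : Matrix (Fin n) (Fin n) ℝ) (ε : ℝ)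
    (s : Finset (Fin n)) :
    (minorMatrix A ε ∅ s).det =
      (A.submatrix (fun i : s => (i : Fin n)) (fun j : s => (j : Fin n))).det := by
  have h := Matrix.twoBlockTriangular_det (minorMatrix A ε ∅ s) (fun i => i ∈ s) (by
    intro i hi j hj
    have hne : j ≠ i := fun h => hi (h ▸ hj)
    simp [minorMatrix, hi, hne])
  have h2 : (minorMatrix A ε ∅ s).toSquareBlockProp (fun i => ¬ i ∈ s) = 1 := by
    ext ⟨i, hi⟩ ⟨j, hj⟩
    simp [Matrix.toSquareBlockProp, minorMatrix, hi, Matrix.one_apply, Pi.single_apply, eq_comm]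
  have h1 : (minorMatrix A ε ∅ s).toSquareBlockProp (fun i => i ∈ s) =
      A.submatrix (fun i : s => (i : Fin n)) (fun j : s => (j : Fin n)) := by
    ext ⟨i, hi⟩ ⟨j, hj⟩
    simp [Matrix.toSquareBlockProp, minorMatrix, hi]
  rw [h, h2, Matrix.det_one, mul_one]
  rw [← h1]
  congr!

/-- Expansion of the determinant along the row that receives the new `ε`. -/
theorem det_minorMatrix_insert {n : ℕ} (A : Matrix (Fin n) (Fin n) ℝ) (ε : ℝ)
    (t s : Finset (Fin n)) (i : Fin n) (hit : i ∉ t) (his : i ∈ s) :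
    (minorMatrix A ε (insert i t) s).det =
      (minorMatrix A ε t s).det + ε * (minorMatrix A ε t (s.erase i)).det := by
  have e1 : minorMatrix A ε (insert i t) s =
      (minorMatrix A ε t s).updateRow i (A i + ε • Pi.single i 1) := by
    ext k l
    rcases eq_or_ne k i with rfl | hk
    · simp [minorMatrix, his, Pi.single_apply]
    · simp [minorMatrix, hk]
  have e2 : (minorMatrix A ε t s).updateRow i (A i) = minorMatrix A ε t s := by
    ext k l
    rcases eq_or_ne k i with rfl | hk
    · simp [minorMatrix, his, hit]
    · simp [hk]
  have e3 : (minorMatrix A ε t s).updateRow i (Pi.single i 1) =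
      minorMatrix A ε t (s.erase i) := by
    ext k l
    rcases eq_or_ne k i with rfl | hk
    · simp [minorMatrix]
    · simp [minorMatrix, hk]
  rw [e1, Matrix.det_updateRow_add, Matrix.det_updateRow_smul, e2, e3]

theorem det_minorMatrix_pos {n : ℕ} {A : Matrix (Fin n) (Fin n) ℝ} (hA : IsMMatrix A) {ε : ℝ}
    (hε : 0 < ε) (s : Finset (Fin n)) : 0 < (minorMatrix A ε s s).det := by
  have key : ∀ t : Finset (Fin n), (∀ s, t ⊆ s → 0 ≤ (minorMatrix A ε t s).det) ∧
      0 < (minorMatrix A ε t t).det := by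
    intro t
    induction t using Finset.induction_on with
    | empty =>
      refine ⟨fun s _ => ?_, ?_⟩
      · rw [det_minorMatrix_empty]
        exact hA.2 s
      · rw [det_minorMatrix_empty, Matrix.det_isEmpty]
        exact one_pos
    | insert i t hit ih =>
      refine ⟨fun s hs => ?_, ?_⟩
      · rw [det_minorMatrix_insert A ε t s i hit (hs (Finset.mem_insert_self i t))]
        have h1 := ih.1 s ((Finset.subset_insert i t).trans hs)
        have h2 := ih.1 (s.erase i)
          (Finset.subset_erase.2 ⟨(Finset.subset_insert i t).trans hs, hit⟩)
        positivity
      · rw [det_minorMatrix_insert A ε t _ i hit (Finset.mem_insert_self i t),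
          Finset.erase_insert hit]
        have h1 := ih.1 (insert i t) (Finset.subset_insert i t)
        have h2 := ih.2
        positivity
  exact (key s).2

theorem minorMatrix_mulVec_of_mem {n : ℕ} (A : Matrix (Fin n) (Fin n) ℝ) (ε : ℝ)
    {s : Finset (Fin n)} {i : Fin n} (hi : i ∈ s) (u : Fin n → ℝ) :
    (minorMatrix A ε s s).mulVec u i = A.mulVec u i + ε * u i := by
  have h : minorMatrix A ε s s i = A i + Pi.single i ε := by simp [minorMatrix, hi]
  change minorMatrix A ε s s i ⬝ᵥ u = A i ⬝ᵥ u + ε * u i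
  rw [h, add_dotProduct, single_dotProduct]

theorem minorMatrix_mulVec_of_notMem {n : ℕ} (A : Matrix (Fin n) (Fin n) ℝ) (ε : ℝ)
    {s : Finset (Fin n)} {i : Fin n} (hi : i ∉ s) (u : Fin n → ℝ) :
    (minorMatrix A ε s s).mulVec u i = u i := by
  simp [Matrix.mulVec, minorMatrix, hi]

/-- Inverse positivity of `A + ε`, localised to the rows in `s`: if `u` is nonnegative outside `s`
and `(A + ε) u` is nonnegative on `s`, then `u` is nonnegative. -/
theorem nonneg_of_minorMatrix_mulVec_nonneg {n : ℕ} {A : Matrix (Fin n) (Fin n) ℝ}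
    (hA : IsMMatrix A) {ε : ℝ} (hε : 0 < ε) (s : Finset (Fin n)) :
    ∀ u : Fin n → ℝ, (∀ i, 0 ≤ (minorMatrix A ε s s).mulVec u i) → ∀ i, 0 ≤ u i := by
  induction s using Finset.induction_on with
  | empty =>
    intro u hu i
    simpa [minorMatrix_mulVec_of_notMem] using hu i
  | insert i s his ih =>
    intro u hu
    have hoff : ∀ k, k ≠ i → ∀ v : Fin n → ℝ,
        (minorMatrix A ε (insert i s) (insert i s)).mulVec v k =
          (minorMatrix A ε s s).mulVec v k := by
      intro k hk v
      by_cases hks : k ∈ s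
      · rw [minorMatrix_mulVec_of_mem A ε hks,
          minorMatrix_mulVec_of_mem A ε (Finset.mem_insert_of_mem hks)]
      · rw [minorMatrix_mulVec_of_notMem A ε hks,
          minorMatrix_mulVec_of_notMem A ε (by simp [hk, hks])]
    by_cases hui : 0 ≤ u i
    · refine ih u fun k => ?_
      rcases eq_or_ne k i with rfl | hk
      · rwa [minorMatrix_mulVec_of_notMem A ε his]
      · rw [← hoff k hk]
        exact hu k
    exfalso
    push Not at hui
    have hdet := det_minorMatrix_pos hA hε s
    -- `z` solves the smaller system with right-hand side the `i`-th unit vector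
    set z : Fin n → ℝ := (minorMatrix A ε s s)⁻¹.mulVec (Pi.single i 1) with hz_def
    have hz : (minorMatrix A ε s s).mulVec z = Pi.single i 1 := by
      rw [hz_def, Matrix.mulVec_mulVec, Matrix.mul_nonsing_inv _ (isUnit_iff_ne_zero.2 hdet.ne'),
        Matrix.one_mulVec]
    have hzi : z i = 1 := by
      rw [← minorMatrix_mulVec_of_notMem A ε his z, hz, Pi.single_eq_same]
    set q : ℝ := (minorMatrix A ε (insert i s) (insert i s)).mulVec z i with hq_def
    have hq : 0 < q := by
      have h1 : (minorMatrix A ε (insert i s) (insert i s)).mulVec z = Pi.single i q := by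
        ext k
        rcases eq_or_ne k i with rfl | hk
        · simp [hq_def]
        · rw [hoff k hk, hz]
          simp [hk]
      have h2 : (minorMatrix A ε (insert i s) (insert i s)).adjugate i i =
          (minorMatrix A ε s s).det := by
        rw [Matrix.adjugate_apply]
        congr 1
        ext k l
        rcases eq_or_ne k i with rfl | hk
        · simp [minorMatrix, his]
        · simp [minorMatrix, hk]
      have h3 := congrFun (congrArg
        (minorMatrix A ε (insert i s) (insert i s)).adjugate.mulVec h1) i
      rw [Matrix.mulVec_mulVec, Matrix.adjugate_mul, Matrix.smul_mulVec, Matrix.one_mulVec,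
        Pi.smul_apply, smul_eq_mul, hzi, Matrix.mulVec_single] at h3
      simp only [Pi.smul_apply, Matrix.col_apply, h2, MulOpposite.smul_eq_mul_unop,
        MulOpposite.unop_op] at h3
      have h4 := det_minorMatrix_pos hA hε (insert i s)
      rw [mul_one] at h3
      rw [h3] at h4
      exact (pos_iff_pos_of_mul_pos h4).1 hdet
    -- removing the negative `i`-th coordinate of `u` along `z` gives a nonnegative vector
    have hw : ∀ k, 0 ≤ (u - u i • z) k := by
      refine ih _ fun k => ?_
      rw [Matrix.mulVec_sub, Matrix.mulVec_smul, hz]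
      rcases eq_or_ne k i with rfl | hk
      · simp [minorMatrix_mulVec_of_notMem A ε his]
      · have := hu k
        rw [hoff k hk] at this
        simpa [hk] using this
    have hwi : (u - u i • z) i = 0 := by simp [hzi]
    have hAw : (minorMatrix A ε (insert i s) (insert i s)).mulVec (u - u i • z) i ≤ 0 := by
      rw [minorMatrix_mulVec_of_mem A ε (Finset.mem_insert_self i s), hwi, mul_zero, add_zero]
      change ∑ k, A i k * (u - u i • z) k ≤ 0
      refine Finset.sum_nonpos fun k _ => ?_
      rcases eq_or_ne k i with rfl | hk
      · rw [hwi, mul_zero]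
      · exact mul_nonpos_of_nonpos_of_nonneg (hA.1 i k hk.symm) (hw k)
    rw [Matrix.mulVec_sub, Matrix.mulVec_smul, Pi.sub_apply, Pi.smul_apply, smul_eq_mul,
      ← hq_def] at hAw
    have := hu i
    nlinarith [mul_neg_of_neg_of_pos hui hq]

/-- A nonnegative vector `L` with `(A L)_i < 0` on its support vanishes, when `A` is an
M-matrix. -/
theorem IsMMatrix.eq_zero_of_mulVec_neg {n : ℕ} {A : Matrix (Fin n) (Fin n) ℝ}
    (hA : IsMMatrix A) (L : Fin n → ℝ) (hL : ∀ i, 0 ≤ L i)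
    (hneg : ∀ i, 0 < L i → A.mulVec L i < 0) (i : Fin n) : L i = 0 := by
  -- `ε` is small enough to keep `(A + ε) L` negative on the support
  obtain ⟨ε, hε, hεL⟩ : ∃ ε : ℝ, 0 < ε ∧ ∀ i, 0 < L i → A.mulVec L i + ε * L i < 0 := by
    have h : ∀ i, ∀ᶠ ε : ℝ in nhdsWithin 0 (Set.Ioi 0),
        0 < L i → A.mulVec L i + ε * L i < 0 := by
      intro i
      by_cases hi : 0 < L i
      · have hc : Filter.Tendsto (fun ε : ℝ => A.mulVec L i + ε * L i) (nhds 0)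
            (nhds (A.mulVec L i + 0 * L i)) := by
          apply Continuous.tendsto
          fun_prop
        have := hc.eventually_lt_const (u := 0) (by simpa using hneg i hi)
        filter_upwards [nhdsWithin_le_nhds this] with ε h _ using h
      · exact Filter.Eventually.of_forall fun ε h => absurd h hi
    obtain ⟨ε, h1, h2⟩ := ((Filter.eventually_all.2 h).and self_mem_nhdsWithin).exists
    exact ⟨ε, h2, h1⟩
  have := nonneg_of_minorMatrix_mulVec_nonneg hA hε (Finset.univ.filter fun i => 0 < L i) (-L)
    (fun k => by
      by_cases hk : 0 < L k
      · rw [minorMatrix_mulVec_of_mem A ε (by simpa using hk), Matrix.mulVec_neg]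
        have := hεL k hk
        simp only [Pi.neg_apply]
        linarith
      · rw [minorMatrix_mulVec_of_notMem A ε (by simpa using hk)]
        simpa using hk) i
  exact le_antisymm (by simpa using this) (hL i)

/-! ### Upper bounds on limsups -/

/-- `EvLe l u L` expresses `limsup |u| ≤ L` along the filter `l`, without any junk value: for each
`η > 0`, eventually `|u| ≤ L + η`. -/
def EvLe {α : Type*} (l : Filter α) (u : α → ℝ) (L : ℝ) : Prop :=
  ∀ η : ℝ, 0 < η → ∀ᶠ m in l, |u m| ≤ L + η

theorem EvLe.comp {α β : Type*} {l : Filter α} {l' : Filter β} {u : α → ℝ} {L : ℝ}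
    (h : EvLe l u L) {φ : β → α} (hφ : Filter.Tendsto φ l' l) : EvLe l' (fun m => u (φ m)) L :=
  fun η hη => hφ.eventually (h η hη)

theorem EvLe.add {α : Type*} {l : Filter α} {u v : α → ℝ} {L K : ℝ}
    (hu : EvLe l u L) (hv : EvLe l v K) : EvLe l (fun m => u m + v m) (L + K) := by
  intro η hη
  filter_upwards [hu (η / 2) (by positivity), hv (η / 2) (by positivity)] with m h1 h2
  have := abs_add_le (u m) (v m)
  linarith

theorem EvLe.mul {α : Type*} {l : Filter α} {u v : α → ℝ} {L K : ℝ}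
    (hL : 0 ≤ L) (hu : EvLe l u L) (hv : EvLe l v K) : EvLe l (fun m => u m * v m) (L * K) := by
  intro η hη
  have hc : Filter.Tendsto (fun δ : ℝ => (L + δ) * (K + δ)) (nhds 0)
      (nhds ((L + 0) * (K + 0))) := by
    apply Continuous.tendsto
    fun_prop
  have h := hc.eventually_lt_const (u := L * K + η) (by simpa using hη)
  obtain ⟨δ, h1, h2⟩ := ((h.filter_mono nhdsWithin_le_nhds).and
    (self_mem_nhdsWithin (a := (0 : ℝ)) (s := Set.Ioi 0))).exists
  have h2 : 0 < δ := h2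
  filter_upwards [hu δ h2, hv δ h2] with m h3 h4
  rw [abs_mul]
  have := mul_le_mul h3 h4 (abs_nonneg _) (by positivity)
  linarith

theorem EvLe.sum {α κ : Type*} {l : Filter α} (s : Finset κ) {u : κ → α → ℝ} {L : κ → ℝ}
    (hu : ∀ k ∈ s, EvLe l (u k) (L k)) :
    EvLe l (fun m => ∑ k ∈ s, u k m) (∑ k ∈ s, L k) := by
  classical
  induction s using Finset.induction_on with
  | empty =>
    intro η hη
    simp [hη.le]
  | insert k s hk ih =>
    simp only [Finset.sum_insert hk]
    exact (hu k (Finset.mem_insert_self k s)).add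
      (ih fun j hj => hu j (Finset.mem_insert_of_mem hj))

theorem evLe_limsup {α : Type*} {l : Filter α} {u : α → ℝ}
    (hu : BddAbove (Set.range fun m => |u m|)) :
    EvLe l u (Filter.limsup (fun m => |u m|) l) := by
  intro η hη
  have hb : Filter.IsBoundedUnder (· ≤ ·) l (fun m => |u m|) := hu.isBoundedUnder_of_range
  filter_upwards [Filter.eventually_lt_of_limsup_lt (lt_add_of_pos_right _ hη) hb] with m hm
  exact hm.le

theorem limsup_abs_nonneg {α : Type*} {l : Filter α} [l.NeBot] {u : α → ℝ}
    (hu : BddAbove (Set.range fun m => |u m|)) :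
    0 ≤ Filter.limsup (fun m => |u m|) l :=
  Filter.le_limsup_of_frequently_le (Filter.Frequently.of_forall fun m => abs_nonneg (u m))
    hu.isBoundedUnder_of_range

theorem limsup_abs_le_of_evLe {α : Type*} {l : Filter α} [l.NeBot] {u : α → ℝ} {L : ℝ}
    (h : EvLe l u L) : Filter.limsup (fun m => |u m|) l ≤ L := by
  refine le_of_forall_pos_le_add fun η hη => ?_
  refine Filter.limsup_le_of_le ?_ (h η hη)
  exact Filter.isCoboundedUnder_le_of_le l (x := 0) fun m => abs_nonneg (u m)

/-- Consequences of the growth condition on an activation function `φ`: it vanishes at `0` and is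
bounded by its constant everywhere. -/
theorem activation_bound {φ : ℝ → ℝ} {Φ : ℝ} (hc : Continuous φ) (hΦ : 0 < Φ)
    (h1 : ∀ u : ℝ, 1 < |u| → |φ u| ≤ Φ)
    (h2 : ∀ u : ℝ, u ≠ 0 → |u| ≤ 1 → |φ u| < Φ * |u|) : φ 0 = 0 ∧ ∀ u, |φ u| ≤ Φ := by
  have h0 : φ 0 = 0 := by
    have hl : Filter.Tendsto (fun u => |φ u|) (nhdsWithin 0 {0}ᶜ) (nhds |φ 0|) :=
      (hc.abs.tendsto 0).mono_left nhdsWithin_le_nhds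
    have hr : Filter.Tendsto (fun u : ℝ => Φ * |u|) (nhdsWithin 0 {0}ᶜ) (nhds (Φ * |(0 : ℝ)|)) :=
      ((continuous_const.mul continuous_abs).tendsto (0 : ℝ)).mono_left nhdsWithin_le_nhds
    have hball : ∀ᶠ u : ℝ in nhdsWithin 0 {0}ᶜ, |u| ≤ 1 := by
      apply nhdsWithin_le_nhds
      have := (continuous_abs.tendsto (0 : ℝ)).eventually_lt_const (u := 1) (by simp)
      filter_upwards [this] with u hu using hu.le
    have := le_of_tendsto_of_tendsto hl hr (by
      filter_upwards [hball, self_mem_nhdsWithin] with u hu hu0 using (h2 u hu0 hu).le)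
    rw [abs_zero, mul_zero] at this
    exact abs_nonpos_iff.1 this
  refine ⟨h0, fun u => ?_⟩
  rcases lt_or_ge 1 |u| with hu | hu
  · exact h1 u hu
  · rcases eq_or_ne u 0 with rfl | hu0
    · simp [h0, hΦ.le]
    · have := h2 u hu0 hu
      nlinarith

/-- If `limsup |u| ≤ L` then `limsup |φ ∘ u|` is at most `max |φ|` over `[-L, L]`, which by
compactness is strictly below `Φ * L` as soon as `L > 0`. -/
theorem exists_activation_limsup {φ : ℝ → ℝ} {Φ : ℝ} (hc : Continuous φ) (hΦ : 0 < Φ)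
    (h1 : ∀ u : ℝ, 1 < |u| → |φ u| ≤ Φ)
    (h2 : ∀ u : ℝ, u ≠ 0 → |u| ≤ 1 → |φ u| < Φ * |u|) {L : ℝ} (hL : 0 ≤ L)
    {u : ℤ → ℝ} (hu : EvLe Filter.atTop u L) :
    ∃ r : ℝ, 0 ≤ r ∧ r ≤ Φ * L ∧ (0 < L → r < Φ * L) ∧
      EvLe Filter.atTop (fun m => φ (u m)) r := by
  obtain ⟨h0, hb⟩ := activation_bound hc hΦ h1 h2
  obtain ⟨w, hw, hmax⟩ := (isCompact_Icc (a := -L) (b := L)).exists_isMaxOn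
    ⟨0, by simp [hL]⟩ hc.abs.continuousOn
  have hwL : |w| ≤ L := abs_le.2 hw
  have hlt : 0 < L → |φ w| < Φ * L := by
    intro hLpos
    rcases eq_or_ne w 0 with rfl | hw0
    · rw [h0, abs_zero]
      positivity
    rcases lt_or_ge 1 |w| with hw1 | hw1
    · have := h1 w hw1
      nlinarith
    · have := h2 w hw0 hw1
      nlinarith
  refine ⟨|φ w|, abs_nonneg _, ?_, hlt, ?_⟩
  · rcases hL.eq_or_lt with rfl | h
    · have : w = 0 := abs_nonpos_iff.1 hwL
      simp [this, h0]
    · exact (hlt h).le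
  · intro η hη
    have huc := (isCompact_Icc (a := -(L + 1)) (b := L + 1)).uniformContinuousOn_of_continuous
      hc.continuousOn
    obtain ⟨δ, hδ, hδ'⟩ := Metric.uniformContinuousOn_iff.1 huc η hη
    filter_upwards [hu (min (δ / 2) 1) (by positivity)] with m hm
    have hm1 : |u m| ≤ L + 1 := hm.trans (by gcongr; exact min_le_right _ _)
    have hm2 : |u m| ≤ L + δ / 2 := hm.trans (by gcongr; exact min_le_left _ _)
    -- compare with the projection of `u m` to `[-L, L]`
    set v : ℝ := max (-L) (min L (u m)) with hv
    obtain ⟨hm1a, hm1b⟩ := abs_le.1 hm1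
    obtain ⟨hm2a, hm2b⟩ := abs_le.1 hm2
    have hvL : v ∈ Set.Icc (-L) L :=
      ⟨le_max_left _ _, max_le (by linarith) (min_le_left _ _)⟩
    have hd : dist (u m) v < δ := by
      rw [Real.dist_eq, abs_lt]
      rcases le_total L (u m) with h | h
      · rw [hv, min_eq_left h, max_eq_right (by linarith)]
        constructor <;> linarith
      · rw [hv, min_eq_right h]
        rcases le_total (-L) (u m) with h' | h'
        · rw [max_eq_right h']
          constructor <;> linarith
        · rw [max_eq_left h']
          constructor <;> linarith
    have h3 := hδ' (u m) ⟨hm1a, hm1b⟩ v ⟨by linarith [hvL.1], by linarith [hvL.2]⟩ hd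
    rw [Real.dist_eq] at h3
    have h4 : |φ v| ≤ |φ w| := hmax hvL
    have h5 := abs_sub_abs_le_abs_sub (φ (u m)) (φ v)
    linarith

theorem abs_tsum_mul_le {z h : ℕ → ℝ} (hz : ∑' l, |z l| = 1) {K : ℝ}
    (hh : ∀ l, |h l| ≤ K) : |∑' l, z l * h l| ≤ K := by
  have hs : Summable fun l => |z l| := by
    by_contra hns
    rw [tsum_eq_zero_of_not_summable hns] at hz
    exact zero_ne_one hz
  have := tsum_of_norm_bounded (f := fun l => z l * h l) (hs.hasSum.mul_right K) (fun l => by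
    rw [Real.norm_eq_abs, abs_mul]
    exact mul_le_mul_of_nonneg_left (hh l) (abs_nonneg _))
  rwa [hz, one_mul, Real.norm_eq_abs] at this

/-- Convolution with a kernel of total mass `1` does not increase the `limsup` of a bounded
sequence; the excess over `r` is controlled by dominated convergence. -/
theorem EvLe.convolution {z : ℕ → ℝ} (hz : ∑' l, |z l| = 1) {h : ℤ → ℝ} {K r : ℝ}
    (hK : ∀ m, |h m| ≤ K) (hr : 0 ≤ r) (hh : EvLe Filter.atTop h r) :
    EvLe Filter.atTop (fun m : ℕ => ∑' l : ℕ, z l * h ((m : ℤ) - l)) r := by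
  have hs : Summable fun l => |z l| := by
    by_contra hns
    rw [tsum_eq_zero_of_not_summable hns] at hz
    exact zero_ne_one hz
  set e : ℤ → ℝ := fun m => max (|h m| - r) 0 with he
  have he0 : ∀ m, 0 ≤ e m := fun m => le_max_right _ _
  have heK : ∀ m, e m ≤ K := fun m =>
    max_le (by linarith [hK m]) ((abs_nonneg _).trans (hK m))
  have hlim : Filter.Tendsto e Filter.atTop (nhds 0) := by
    rw [Metric.tendsto_nhds]
    intro η hη
    filter_upwards [hh (η / 2) (by positivity)] with m hm
    rw [Real.dist_eq, sub_zero, abs_of_nonneg (he0 m)]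
    exact max_lt (by linarith) hη
  have hsum : Filter.Tendsto (fun m : ℕ => ∑' l : ℕ, |z l| * e ((m : ℤ) - l)) Filter.atTop
      (nhds (∑' l : ℕ, |z l| * 0)) := by
    refine tendsto_tsum_of_dominated_convergence (bound := fun l => |z l| * K)
      (hs.mul_right K) (fun l => ?_) (Filter.Eventually.of_forall fun m l => ?_)
    · refine Filter.Tendsto.const_mul _ (hlim.comp ?_)
      exact Filter.tendsto_atTop_add_const_right _ (-(l : ℤ)) tendsto_natCast_atTop_atTop
    · rw [Real.norm_eq_abs, abs_mul, abs_abs, abs_of_nonneg (he0 _)]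
      exact mul_le_mul_of_nonneg_left (heK _) (abs_nonneg _)
  simp only [mul_zero, tsum_zero] at hsum
  intro η hη
  filter_upwards [hsum.eventually_lt_const hη] with m hm
  have hse : Summable fun l : ℕ => |z l| * e ((m : ℤ) - l) :=
    Summable.of_nonneg_of_le (fun l => mul_nonneg (abs_nonneg _) (he0 _))
      (fun l => mul_le_mul_of_nonneg_left (heK _) (abs_nonneg _)) (hs.mul_right K)
  have hsr := hs.mul_right r
  have hb := tsum_of_norm_bounded (f := fun l : ℕ => z l * h ((m : ℤ) - l))
    (hsr.add hse).hasSum (fun l => by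
      rw [Real.norm_eq_abs, abs_mul, ← mul_add]
      refine mul_le_mul_of_nonneg_left ?_ (abs_nonneg _)
      have := le_max_left (|h ((m : ℤ) - l)| - r) 0
      simp only [he]
      linarith)
  rw [hsr.tsum_add hse, tsum_mul_right, hz, one_mul, Real.norm_eq_abs] at hb
  linarith

/-- `0 ≤ q` and `p ≤ q`, with strict inequality `p < q` unless `q` vanishes. This is
the form of comparison that is
stable under finite sums in which some terms may be zero. -/
def LtUnlessZero (p q : ℝ) : Prop := 0 ≤ q ∧ p ≤ q ∧ (0 < q → p < q)

theorem LtUnlessZero.add {p q p' q' : ℝ} (h : LtUnlessZero p q) (h' : LtUnlessZero p' q') :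
    LtUnlessZero (p + p') (q + q') := by
  refine ⟨add_nonneg h.1 h'.1, add_le_add h.2.1 h'.2.1, fun hq => ?_⟩
  rcases h.1.eq_or_lt with h0 | h0
  · exact add_lt_add_of_le_of_lt h.2.1 (h'.2.2 (by linarith))
  · exact add_lt_add_of_lt_of_le (h.2.2 h0) h'.2.1

theorem LtUnlessZero.sum {κ : Type*} (s : Finset κ) {p q : κ → ℝ}
    (h : ∀ k ∈ s, LtUnlessZero (p k) (q k)) :
    LtUnlessZero (∑ k ∈ s, p k) (∑ k ∈ s, q k) := by
  classical
  induction s using Finset.induction_on with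
  | empty => exact ⟨by simp, by simp, by simp⟩
  | insert k s hk ih =>
    rw [Finset.sum_insert hk, Finset.sum_insert hk]
    exact (h k (Finset.mem_insert_self k s)).add
      (ih fun j hj => h j (Finset.mem_insert_of_mem hj))

theorem LtUnlessZero.mul_activation {β r Φ L : ℝ} (hβ : 0 ≤ β) (hΦ : 0 < Φ) (hL : 0 ≤ L)
    (hr : r ≤ Φ * L) (hr' : 0 < L → r < Φ * L) : LtUnlessZero (β * r) (β * Φ * L) := by
  refine ⟨by positivity, ?_, fun h => ?_⟩
  · rw [mul_assoc]
    exact mul_le_mul_of_nonneg_left hr hβ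
  · have hL' : 0 < L := hL.lt_of_ne fun h0 => by simp [← h0] at h
    have hβ' : 0 < β := hβ.lt_of_ne fun h0 => by simp [← h0] at h
    rw [mul_assoc]
    exact mul_lt_mul_of_pos_left (hr' hL') hβ'

/-! ### Attractivity -/

/-- Theorem 3.1, item i: under (H1)-(H5), (H6), if the matrix `M̂` (built from the
limsups of the coefficients) is an M-matrix, then every solution of model (1) with
bounded initial condition tends to `0` in the max norm. -/
theorem global_attractivity_H6_Mhat_Mmatrix
    (n P : ℕ) (hn : 1 ≤ n) (hP : 1 ≤ P)
    (a : Fin n → ℕ → ℝ) (ν : Fin n → ℕ → ℕ)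
    (b : Fin n → Fin n → Fin P → ℕ → ℝ)
    (τ : Fin n → Fin n → Fin P → ℕ → ℕ)
    (c : Fin n → Fin n → ℕ → ℝ)
    (ζ : Fin n → Fin n → ℕ → ℝ)
    (I : Fin n → ℕ → ℝ)
    (f : Fin n → Fin n → Fin P → ℝ → ℝ)
    (g : Fin n → Fin n → ℝ → ℝ)
    (F : Fin n → Fin n → Fin P → ℝ)
    (G : Fin n → Fin n → ℝ)
    (σ : ℕ) (x : ℤ → Fin n → ℝ)
    -- `x` has bounded initial condition: it is bounded on `(-∞, σ] ∩ ℤ`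
    (hinit : ∃ B : ℝ, ∀ m : ℤ, m ≤ (σ : ℤ) → ‖x m‖ ≤ B)
    -- the inner series converge absolutely
    (habs : ∀ (i j : Fin n) (m : ℤ), Summable fun l : ℕ => |ζ i j l * g i j (x (m - l) j)|)
    -- `x` is a solution of model (1) from the initial time `σ` on
    (hmodel : ∀ m : ℕ, σ ≤ m → ∀ i : Fin n,
      x ((m : ℤ) + 1) i =
        a i m * x ((m : ℤ) - ν i m) i
        + ∑ j, ∑ p, b i j p m * f i j p (x ((m : ℤ) - τ i j p m) j)
        + ∑ j, c i j m * ∑' l : ℕ, ζ i j l * g i j (x ((m : ℤ) - l) j)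
        + I i m)
    -- (H1)
    (hH1 : ∀ i, BddAbove (Set.range fun m : ℕ => |a i m|) ∧ (⨆ m : ℕ, |a i m|) < 1)
    -- (H2)
    (hH2ν : ∀ i, Filter.Tendsto (fun m : ℕ => (m : ℤ) - ν i m) Filter.atTop Filter.atTop)
    (hH2τ : ∀ i j p,
      Filter.Tendsto (fun m : ℕ => (m : ℤ) - τ i j p m) Filter.atTop Filter.atTop)
    -- (H3)
    (hH3b : ∀ i j p, BddAbove (Set.range fun m : ℕ => |b i j p m|))
    (hH3c : ∀ i j, BddAbove (Set.range fun m : ℕ => |c i j m|))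
    -- (H4)
    (hH4 : ∀ i j, ∑' l : ℕ, |ζ i j l| = 1)
    -- (H5)
    (hH5 : ∀ i, Summable fun m : ℕ => |I i m|)
    -- (H6)
    (hH6f : ∀ i j p, Continuous (f i j p) ∧ 0 < F i j p ∧
      (∀ u : ℝ, 1 < |u| → |f i j p u| ≤ F i j p) ∧
      (∀ u : ℝ, u ≠ 0 → |u| ≤ 1 → |f i j p u| < F i j p * |u|))
    (hH6g : ∀ i j, Continuous (g i j) ∧ 0 < G i j ∧
      (∀ u : ℝ, 1 < |u| → |g i j u| ≤ G i j) ∧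
      (∀ u : ℝ, u ≠ 0 → |u| ≤ 1 → |g i j u| < G i j * |u|))
    -- the matrix `M̂` is an M-matrix
    (hM : IsMMatrix (Matrix.of fun i j : Fin n =>
        (if i = j then 1 - Filter.limsup (fun m : ℕ => |a i m|) Filter.atTop else 0)
        - (Filter.limsup (fun m : ℕ => |c i j m|) Filter.atTop * G i j
           + ∑ p, Filter.limsup (fun m : ℕ => |b i j p m|) Filter.atTop * F i j p))) :
    Filter.Tendsto (fun m : ℤ => ‖x m‖) Filter.atTop (nhds 0) := by
  -- global bounds on the coefficients
  set A : Fin n → ℝ := fun i => ⨆ m : ℕ, |a i m| with hA_def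
  have hA : ∀ i m, |a i m| ≤ A i := fun i m => le_ciSup (hH1 i).1 m
  have hA0 : ∀ i, 0 ≤ A i := fun i => (abs_nonneg _).trans (hA i 0)
  choose Bb hBb using fun i j p => hH3b i j p
  choose Cc hCc using fun i j => hH3c i j
  have hBb' : ∀ i j p m, |b i j p m| ≤ Bb i j p := fun i j p m => hBb i j p ⟨m, rfl⟩
  have hCc' : ∀ i j m, |c i j m| ≤ Cc i j := fun i j m => hCc i j ⟨m, rfl⟩
  have hfb : ∀ i j p u, |f i j p u| ≤ F i j p := fun i j p =>
    (activation_bound (hH6f i j p).1 (hH6f i j p).2.1 (hH6f i j p).2.2.1 (hH6f i j p).2.2.2).2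
  have hgb : ∀ i j u, |g i j u| ≤ G i j := fun i j =>
    (activation_bound (hH6g i j).1 (hH6g i j).2.1 (hH6g i j).2.2.1 (hH6g i j).2.2.2).2
  have hIb : ∀ i m, |I i m| ≤ ∑' m, |I i m| := fun i m =>
    (hH5 i).le_tsum m fun _ _ => abs_nonneg _
  -- the solution is bounded, since `|a| ≤ A < 1` and the other terms are bounded
  obtain ⟨R, hR⟩ : ∃ R : ℝ, ∀ (m : ℤ) i, |x m i| ≤ R := by
    obtain ⟨B, hB⟩ := hinit
    set C : Fin n → ℝ := fun i =>
      ∑ j, ∑ p, Bb i j p * F i j p + ∑ j, Cc i j * G i j + ∑' m, |I i m| with hC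
    have hBb0 : ∀ i j p, 0 ≤ Bb i j p := fun i j p => (abs_nonneg _).trans (hBb' i j p 0)
    have hCc0 : ∀ i j, 0 ≤ Cc i j := fun i j => (abs_nonneg _).trans (hCc' i j 0)
    have hC0 : ∀ i, 0 ≤ C i / (1 - A i) := by
      intro i
      refine div_nonneg (add_nonneg (add_nonneg ?_ ?_) ?_) (by linarith [(hH1 i).2])
      · exact Finset.sum_nonneg fun j _ => Finset.sum_nonneg fun p _ =>
          mul_nonneg (hBb0 i j p) (hH6f i j p).2.1.le
      · exact Finset.sum_nonneg fun j _ => mul_nonneg (hCc0 i j) (hH6g i j).2.1.le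
      · exact tsum_nonneg fun _ => abs_nonneg _
    set R : ℝ := B + ∑ i, C i / (1 - A i) with hRdef
    have hRB : B ≤ R := by
      have := Finset.sum_nonneg fun i (_ : i ∈ Finset.univ) => hC0 i
      linarith
    have hB0 : 0 ≤ B := (norm_nonneg _).trans (hB σ le_rfl)
    have hRC : ∀ i, A i * R + C i ≤ R := by
      intro i
      have h1 := Finset.single_le_sum (fun i _ => hC0 i) (Finset.mem_univ i)
      have h2 : C i / (1 - A i) ≤ R := by linarith
      rw [div_le_iff₀ (by linarith [(hH1 i).2])] at h2
      linarith
    have key : ∀ k : ℕ, ∀ m : ℤ, m ≤ (σ : ℤ) + k → ∀ i, |x m i| ≤ R := by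
      intro k
      induction k with
      | zero =>
        intro m hm i
        exact ((norm_le_pi_norm (x m) i).trans (hB m (by simpa using hm))).trans hRB
      | succ k ih =>
        intro m hm i
        rcases (show m ≤ (σ : ℤ) + k ∨ m = ((σ + k : ℕ) : ℤ) + 1 by push_cast at hm ⊢; omega)
          with h | rfl
        · exact ih m h i
        rw [hmodel (σ + k) (Nat.le_add_right _ _) i]
        refine le_trans ?_ (hRC i)
        rw [hC, ← add_assoc, ← add_assoc]
        refine (abs_add_le _ _).trans (add_le_add ((abs_add_le _ _).trans (add_le_add
          ((abs_add_le _ _).trans (add_le_add ?_ ?_)) ?_)) (hIb i _))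
        · rw [abs_mul]
          exact mul_le_mul (hA i _) (ih _ (by push_cast; omega) i) (abs_nonneg _) (hA0 i)
        · refine (Finset.abs_sum_le_sum_abs _ _).trans (Finset.sum_le_sum fun j _ =>
            (Finset.abs_sum_le_sum_abs _ _).trans (Finset.sum_le_sum fun p _ => ?_))
          rw [abs_mul]
          exact mul_le_mul (hBb' i j p _) (hfb i j p _) (abs_nonneg _) (hBb0 i j p)
        · refine (Finset.abs_sum_le_sum_abs _ _).trans (Finset.sum_le_sum fun j _ => ?_)
          rw [abs_mul]
          exact mul_le_mul (hCc' i j _) (abs_tsum_mul_le (hH4 i j) fun l => hgb i j _)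
            (abs_nonneg _) (hCc0 i j)
    exact ⟨R, fun m i => key (m - σ).toNat m (by omega) i⟩
  have hxb : ∀ j, BddAbove (Set.range fun m : ℤ => |x m j|) := fun j =>
    ⟨R, by rintro _ ⟨m, rfl⟩; exact hR m j⟩
  set L : Fin n → ℝ := fun j => Filter.limsup (fun m : ℤ => |x m j|) Filter.atTop with hLdef
  have hL0 : ∀ j, 0 ≤ L j := fun j => limsup_abs_nonneg (hxb j)
  have hL : ∀ j, EvLe Filter.atTop (fun m : ℤ => x m j) (L j) := fun j => evLe_limsup (hxb j)
  choose rf hrf0 hrf hrf' hrfE using fun i j p =>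
    exists_activation_limsup (hH6f i j p).1 (hH6f i j p).2.1 (hH6f i j p).2.2.1
      (hH6f i j p).2.2.2 (hL0 j) (hL j)
  choose rg hrg0 hrg hrg' hrgE using fun i j =>
    exists_activation_limsup (hH6g i j).1 (hH6g i j).2.1 (hH6g i j).2.2.1
      (hH6g i j).2.2.2 (hL0 j) (hL j)
  set â : Fin n → ℝ := fun i => Filter.limsup (fun m : ℕ => |a i m|) Filter.atTop with hâ
  set b' : Fin n → Fin n → Fin P → ℝ := fun i j p =>
    Filter.limsup (fun m : ℕ => |b i j p m|) Filter.atTop with hb'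
  set c' : Fin n → Fin n → ℝ := fun i j =>
    Filter.limsup (fun m : ℕ => |c i j m|) Filter.atTop with hc'
  have hâ0 : ∀ i, 0 ≤ â i := fun i => limsup_abs_nonneg (hH1 i).1
  have hb0 : ∀ i j p, 0 ≤ b' i j p := fun i j p => limsup_abs_nonneg (hH3b i j p)
  have hc0 : ∀ i j, 0 ≤ c' i j := fun i j => limsup_abs_nonneg (hH3c i j)
  have hâ1 : ∀ i, â i < 1 := by
    intro i
    refine lt_of_le_of_lt (limsup_abs_le_of_evLe fun η hη => ?_) (hH1 i).2
    exact Filter.Eventually.of_forall fun m => (hA i m).trans (by linarith)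
  -- pass to the limsup in the model
  have hrec : ∀ i, L i ≤ â i * L i + ∑ j, ∑ p, b' i j p * rf i j p + ∑ j, c' i j * rg i j := by
    intro i
    apply limsup_abs_le_of_evLe
    have hIE : EvLe Filter.atTop (I i) 0 := by
      intro η hη
      filter_upwards [(hH5 i).tendsto_atTop_zero.eventually_lt_const hη] with m hm
      linarith
    have hE := (((evLe_limsup (hH1 i).1).mul (hâ0 i) ((hL i).comp (hH2ν i))).add
      (EvLe.sum Finset.univ fun j _ => EvLe.sum Finset.univ fun p _ =>
        (evLe_limsup (hH3b i j p)).mul (hb0 i j p)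
          ((hrfE i j p).comp (hH2τ i j p)))).add
      (EvLe.sum Finset.univ fun j _ => (evLe_limsup (hH3c i j)).mul (hc0 i j)
        (EvLe.convolution (hH4 i j) (fun m => hgb i j (x m j)) (hrg0 i j) (hrgE i j)))
    intro η hη
    obtain ⟨N, hN⟩ := Filter.eventually_atTop.1 ((hE.add hIE) η hη)
    filter_upwards [Filter.eventually_ge_atTop ((max N σ : ℕ) + 1 : ℤ)] with k hk
    obtain ⟨m, rfl⟩ : ∃ m : ℕ, k = (m : ℤ) + 1 := ⟨(k - 1).toNat, by omega⟩
    have hm : max N σ ≤ m := by omega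
    rw [hmodel m ((le_max_right _ _).trans hm) i]
    simpa only [add_zero] using hN m ((le_max_left _ _).trans hm)
  -- `M̂ L` is negative on the support of `L`, so `L = 0`
  have hLz : ∀ i, L i = 0 := by
    refine hM.eq_zero_of_mulVec_neg L hL0 fun i hi => ?_
    have hlt : LtUnlessZero (∑ j, (∑ p, b' i j p * rf i j p + c' i j * rg i j))
        (∑ j, (∑ p, b' i j p * F i j p * L j + c' i j * G i j * L j)) :=
      LtUnlessZero.sum _ fun j _ =>
        (LtUnlessZero.sum _ fun p _ => LtUnlessZero.mul_activation (hb0 i j p)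
          (hH6f i j p).2.1 (hL0 j) (hrf i j p) (hrf' i j p)).add
        (LtUnlessZero.mul_activation (hc0 i j) (hH6g i j).2.1 (hL0 j) (hrg i j) (hrg' i j))
    have hpos : 0 < (1 - â i) * L i := mul_pos (by linarith [hâ1 i]) hi
    have hle : (1 - â i) * L i ≤ ∑ j, (∑ p, b' i j p * rf i j p + c' i j * rg i j) := by
      rw [Finset.sum_add_distrib]
      linarith [hrec i]
    have hfin := hle.trans_lt (hlt.2.2 (hpos.trans_le (hle.trans hlt.2.1)))
    have hexp : Matrix.mulVec (Matrix.of fun i j : Fin n =>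
        (if i = j then 1 - â i else 0) - (c' i j * G i j + ∑ p, b' i j p * F i j p)) L i =
        (1 - â i) * L i - ∑ j, (∑ p, b' i j p * F i j p * L j + c' i j * G i j * L j) := by
      simp only [Matrix.mulVec, dotProduct, Matrix.of_apply, sub_mul, Finset.sum_sub_distrib,
        ite_mul, zero_mul, Finset.sum_ite_eq, Finset.mem_univ, if_true, add_mul, Finset.sum_mul]
      congr 1
      exact Finset.sum_congr rfl fun j _ => add_comm _ _
    have : Matrix.mulVec (Matrix.of fun i j : Fin n =>
        (if i = j then 1 - â i else 0) - (c' i j * G i j + ∑ p, b' i j p * F i j p)) L i < 0 := by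
      rw [hexp]
      linarith
    exact this
  rw [Metric.tendsto_nhds]
  intro η hη
  filter_upwards [Filter.eventually_all.2 fun j => hL j (η / 2) (by positivity)] with m hm
  rw [Real.dist_eq, sub_zero, abs_of_nonneg (norm_nonneg _)]
  refine lt_of_le_of_lt ((pi_norm_le_iff_of_nonneg (by positivity)).2 fun j => ?_)
    (half_lt_self hη)
  simpa [hLz j] using hm j
end

section
/- Let x : ℤ → ℝⁿ be a solution of model (1) with initial time σ ∈ ℕ and bounded initial condition. If hypotheses (H1)–(H5) and (H6*) hold and the matrix M⁺ is a singular irreducible M-matrix, then |x(m)| → 0 as m → ∞ (in the max norm on ℝⁿ). (Theorem 3.1, item ii.) -/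
/-- A real square matrix is reducible if `n = 1` and `A = 0`, or if some simultaneous
permutation of rows and columns puts it in block lower triangular form; equivalently,
there is a nonempty proper subset `S` of indices with `A i j = 0` whenever
`i ∈ S` and `j ∉ S`. -/
def IsReducible {n : ℕ} (A : Matrix (Fin n) (Fin n) ℝ) : Prop :=
  (n = 1 ∧ A = 0) ∨
  ∃ S : Finset (Fin n), S.Nonempty ∧ S ≠ Finset.univ ∧ ∀ i ∈ S, ∀ j ∉ S, A i j = 0

/-! ### M-matrices and positive vectors -/

/-- Up to sign, the coefficients of the characteristic polynomial of `-A` are sums of principal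
minors of `A`, so `det (t + A)` is a monic polynomial in `t` with nonnegative coefficients. -/
lemma IsMMatrix.det_add_pos {n : ℕ} {A : Matrix (Fin n) (Fin n) ℝ} (hA : IsMMatrix A)
    {t : ℝ} (ht : 0 < t) : 0 < (Matrix.scalar (Fin n) t + A).det := by
  have hcoef : ∀ k, 0 ≤ (-A).charpoly.coeff k := by
    intro k
    rcases le_or_gt k n with hk | hk
    · have h := Matrix.charpoly_coeff_eq_sum_minors (-A) (n - k) (by simp)
      rw [Fintype.card_fin, Nat.sub_sub_self hk] at h
      rw [h, Finset.mul_sum]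
      refine Finset.sum_nonneg fun s hs => ?_
      have hcard := (Finset.mem_powersetCard.mp hs).2
      simp only [Matrix.submatrix_neg, Pi.neg_apply, Matrix.det_neg, Fintype.card_coe, hcard]
      rw [← mul_assoc, ← mul_pow]
      simpa using hA.2 s
    · rw [Polynomial.coeff_eq_zero_of_natDegree_lt]
      simpa [Matrix.charpoly_natDegree_eq_dim] using hk
  have h1 : (-A).charpoly.eval t = (Matrix.scalar (Fin n) t + A).det := by
    rw [Matrix.eval_charpoly, sub_neg_eq_add]
  rw [← h1, Polynomial.eval_eq_sum_range]
  refine Finset.sum_pos' (fun k _ => mul_nonneg (hcoef k) (by positivity))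
    ⟨(-A).charpoly.natDegree, by simp, ?_⟩
  rw [Polynomial.coeff_natDegree, (Matrix.charpoly_monic (-A)).leadingCoeff]
  positivity

lemma scalar_add_mulVec_apply {n : ℕ} (A : Matrix (Fin n) (Fin n) ℝ) (t : ℝ) (v : Fin n → ℝ)
    (i : Fin n) : ((Matrix.scalar (Fin n) t + A).mulVec v) i = t * v i + A.mulVec v i := by
  simp [Matrix.add_mulVec]

/-- For `t > 0` the vector `cramer (t + A) 1`, a positive multiple of `(t + A)⁻¹ 1`, is positive.
This is clear for large `t` by diagonal dominance. As `t` decreases, positivity can only be lost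
by first becoming mere nonnegativity, and the sign pattern of `A` upgrades that to positivity. -/
lemma IsMMatrix.cramer_pos {n : ℕ} {A : Matrix (Fin n) (Fin n) ℝ} (hA : IsMMatrix A)
    {t : ℝ} (ht : 0 < t) (i : Fin n) :
    0 < Matrix.cramer (Matrix.scalar (Fin n) t + A) (fun _ => 1) i := by
  set e : ℝ → Fin n → ℝ := fun t => Matrix.cramer (Matrix.scalar (Fin n) t + A) (fun _ => 1)
    with he
  have hscal : Continuous fun t : ℝ => Matrix.scalar (Fin n) t + A := by
    refine Continuous.add ?_ continuous_const
    exact Continuous.matrix_diagonal (continuous_pi fun _ => continuous_id)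
  have hcont : Continuous e := hscal.matrix_cramer continuous_const
  have hrow : ∀ s, 0 < s → ∀ i, 0 < s * e s i + ∑ j, A i j * e s j := by
    intro s hs i
    have h := congrFun (Matrix.mulVec_cramer (Matrix.scalar (Fin n) s + A) (fun _ => (1 : ℝ))) i
    rw [scalar_add_mulVec_apply] at h
    have h2 := hA.det_add_pos hs
    simp only [Pi.smul_apply, smul_eq_mul, mul_one] at h
    rw [← h] at h2
    exact h2
  have hup : ∀ s, 0 < s → (∀ i, 0 ≤ e s i) → ∀ i, 0 < e s i := by
    intro s hs h0 i
    refine lt_of_le_of_ne (h0 i) fun hi => ?_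
    have h := hrow s hs i
    have : ∑ j, A i j * e s j ≤ 0 := by
      refine Finset.sum_nonpos fun j _ => ?_
      by_cases hij : i = j
      · subst hij; rw [← hi]; simp
      · exact mul_nonpos_of_nonpos_of_nonneg (hA.1 i j hij) (h0 j)
    rw [← hi] at h
    linarith
  have hopen : IsOpen {s : ℝ | ∀ i, 0 < e s i} := by
    simp only [Set.ofPred_forall]
    exact isOpen_iInter_of_finite fun i =>
      isOpen_lt continuous_const ((continuous_apply i).comp hcont)
  have hlarge : ∃ s : ℝ, 0 < s ∧ ∀ i, 0 < e s i := by
    refine ⟨1 + ∑ i, ∑ j, |A i j|, by positivity, ?_⟩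
    set s := 1 + ∑ i, ∑ j, |A i j| with hs
    have hs0 : 0 < s := by positivity
    refine hup s hs0 ?_
    by_contra! hneg
    obtain ⟨i₀, hi₀⟩ := hneg
    have : Nonempty (Fin n) := ⟨i₀⟩
    obtain ⟨k, hk⟩ := Finite.exists_min (e s)
    have hk0 : e s k < 0 := (hk i₀).trans_lt hi₀
    have h := hrow s hs0 k
    have h1 : ∑ j, A k j * e s j ≤ ∑ j, A k j * e s k := by
      refine Finset.sum_le_sum fun j _ => ?_
      by_cases hkj : k = j
      · rw [hkj]
      · exact mul_le_mul_of_nonpos_left (hk j) (hA.1 k j hkj)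
    rw [← Finset.sum_mul] at h1
    have h2 : -∑ j, A k j ≤ ∑ i, ∑ j, |A i j| := by
      calc -∑ j, A k j ≤ ∑ j, |A k j| := by
            rw [← Finset.sum_neg_distrib]
            exact Finset.sum_le_sum fun j _ => neg_le_abs _
        _ ≤ _ := Finset.single_le_sum (f := fun i => ∑ j, |A i j|)
            (fun i _ => Finset.sum_nonneg fun j _ => abs_nonneg _) (Finset.mem_univ k)
    nlinarith
  obtain ⟨s, hs0, hs⟩ := hlarge
  refine (isPreconnected_Ioi (a := (0 : ℝ))).subset_of_closure_inter_subset hopen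
    ⟨s, hs0, hs⟩ ?_ ht i
  rintro r ⟨hr, hr0⟩
  refine hup r hr0 ?_
  have hclosed : IsClosed {s : ℝ | ∀ i, 0 ≤ e s i} := by
    simp only [Set.ofPred_forall]
    exact isClosed_iInter fun i => isClosed_le continuous_const ((continuous_apply i).comp hcont)
  exact closure_minimal (fun s hs i => (hs i).le) hclosed hr

/-- An irreducible M-matrix `A` has a positive vector `d` with `A d ≥ 0`: normalise the positive
solutions of `(t + A) e = const` to the simplex and let `t → 0`; irreducibility excludes zero
entries in the limit. -/
lemma IsMMatrix.exists_pos_vec {n : ℕ} (hn : 1 ≤ n) {A : Matrix (Fin n) (Fin n) ℝ}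
    (hA : IsMMatrix A) (hirr : ¬ IsReducible A) :
    ∃ d : Fin n → ℝ, (∀ i, 0 < d i) ∧ ∀ i, 0 ≤ ∑ j, A i j * d j := by
  have : Nonempty (Fin n) := ⟨⟨0, hn⟩⟩
  have happrox : ∀ k : ℕ, ∃ d ∈ stdSimplex ℝ (Fin n),
      ∀ i, -(1 / ((k : ℝ) + 1)) ≤ ∑ j, A i j * d j := by
    intro k
    set t : ℝ := 1 / ((k : ℝ) + 1) with ht
    have ht0 : 0 < t := by positivity
    set e := Matrix.cramer (Matrix.scalar (Fin n) t + A) (fun _ => 1) with he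
    have hpos : ∀ i, 0 < e i := fun i => hA.cramer_pos ht0 i
    set S := ∑ i, e i with hS
    have hS0 : 0 < S := Finset.sum_pos (fun i _ => hpos i) Finset.univ_nonempty
    refine ⟨fun i => e i / S, ⟨fun i => (div_pos (hpos i) hS0).le, ?_⟩, fun i => ?_⟩
    · rw [← Finset.sum_div]; exact div_self hS0.ne'
    · have h := congrFun (Matrix.mulVec_cramer (Matrix.scalar (Fin n) t + A) (fun _ => (1 : ℝ))) i
      rw [scalar_add_mulVec_apply] at h
      have h2 := hA.det_add_pos ht0
      simp only [Pi.smul_apply, smul_eq_mul, mul_one] at h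
      rw [← h] at h2
      have h3 : 0 < t * e i + ∑ j, A i j * e j := h2
      have h4 : e i ≤ S := Finset.single_le_sum (f := e) (fun j _ => (hpos j).le)
        (Finset.mem_univ i)
      simp only [← mul_div_assoc]
      rw [← Finset.sum_div, le_div_iff₀ hS0]
      nlinarith
  choose u hu hAu using happrox
  obtain ⟨d, hd, φ, hφ, hlim⟩ := (isCompact_stdSimplex ℝ (Fin n)).tendsto_subseq hu
  have hAd : ∀ i, 0 ≤ ∑ j, A i j * d j := by
    intro i
    have h1 : Filter.Tendsto (fun k => ∑ j, A i j * u (φ k) j) Filter.atTop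
        (nhds (∑ j, A i j * d j)) :=
      tendsto_finsetSum _ fun j _ => ((tendsto_pi_nhds.mp hlim) j).const_mul _
    have h2 : Filter.Tendsto (fun k => -(1 / (((φ k : ℕ) : ℝ) + 1))) Filter.atTop (nhds 0) := by
      have := (tendsto_one_div_add_atTop_nhds_zero_nat (𝕜 := ℝ)).comp hφ.tendsto_atTop
      simpa using this.neg
    exact le_of_tendsto_of_tendsto' h2 h1 fun k => hAu (φ k) i
  refine ⟨d, fun i => lt_of_le_of_ne (hd.1 i) fun hi => hirr (Or.inr ?_), hAd⟩
  refine ⟨Finset.univ.filter fun j => d j = 0, ⟨i, by simp [← hi]⟩, ?_, ?_⟩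
  · intro hall
    have h0 : ∀ j, d j = 0 := fun j => by
      have := Finset.mem_univ j
      rw [← hall] at this
      simpa using this
    have := hd.2
    simp [h0] at this
  · intro k hk j hj
    simp only [Finset.mem_filter, Finset.mem_univ, true_and] at hk hj
    have hle : ∀ l ∈ Finset.univ, A k l * d l ≤ 0 := by
      intro l _
      by_cases hkl : k = l
      · subst hkl; simp [hk]
      · exact mul_nonpos_of_nonpos_of_nonneg (hA.1 k l hkl) (hd.1 l)
    have hz := (Finset.sum_eq_zero_iff_of_nonpos hle).mp
      (le_antisymm (Finset.sum_nonpos hle) (hAd k)) j (Finset.mem_univ j)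
    exact (mul_eq_zero.mp hz).resolve_right hj

/-! ### Gains of the activation functions -/

lemma abs_le_mul_abs_of_lt {f : ℝ → ℝ} {F : ℝ} (hf : Continuous f)
    (h : ∀ u : ℝ, u ≠ 0 → |f u| < F * |u|) (u : ℝ) : |f u| ≤ F * |u| := by
  have hdense : Dense {u : ℝ | u ≠ 0} := dense_compl_singleton 0
  have hcl : IsClosed {u : ℝ | |f u| ≤ F * |u|} :=
    isClosed_le hf.abs (continuous_const.mul continuous_abs)
  exact closure_minimal (fun v hv => (h v hv).le) hcl (hdense u)

/-- The strict bound `|f u| < F |u|` becomes a uniform gain `q F` with `q < 1` once the radius `r`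
stays in a compact interval away from `0`: the continuous function `|f u| / max |u| L` attains a
maximum smaller than `F` on `[-2L, 2L]`. -/
lemma eventually_gain {f : ℝ → ℝ} {F L : ℝ} (hf : Continuous f) (hF : 0 < F)
    (h : ∀ u : ℝ, u ≠ 0 → |f u| < F * |u|) (hL : 0 < L) :
    ∀ᶠ q in nhdsWithin (1 : ℝ) (Set.Iio 1),
      ∀ r, L ≤ r → r ≤ 2 * L → ∀ u, |u| ≤ r → |f u| ≤ q * (F * r) := by
  have hmax : ∀ u : ℝ, 0 < max |u| L := fun u => lt_max_of_lt_right hL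
  have hcont : Continuous fun u : ℝ => |f u| / max |u| L :=
    hf.abs.div (continuous_abs.max continuous_const) fun u => (hmax u).ne'
  obtain ⟨u₀, -, hu₀⟩ := (isCompact_Icc (a := -(2 * L)) (b := 2 * L)).exists_isMaxOn
    ⟨0, by constructor <;> linarith⟩ hcont.continuousOn
  set K := |f u₀| / max |u₀| L with hK
  have hK0 : 0 ≤ K := by positivity
  have hKF : K < F := by
    rw [hK, div_lt_iff₀ (hmax u₀)]
    by_cases h0 : u₀ = 0
    · have := abs_le_mul_abs_of_lt hf h u₀
      rw [h0, abs_zero, mul_zero] at this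
      rw [h0]
      exact this.trans_lt (mul_pos hF (hmax 0))
    · exact (h u₀ h0).trans_le (mul_le_mul_of_nonneg_left (le_max_left _ _) hF.le)
  have hev : ∀ᶠ q in nhdsWithin (1 : ℝ) (Set.Iio 1), K < q * F := by
    refine Filter.Eventually.filter_mono nhdsWithin_le_nhds ?_
    have : Filter.Tendsto (fun q : ℝ => q * F) (nhds 1) (nhds (1 * F)) :=
      Filter.tendsto_id.mul_const F
    exact this.eventually_const_lt (by linarith)
  filter_upwards [hev] with q hq r hr1 hr2 u hu
  have h1 : |f u| / max |u| L ≤ K := hu₀ (abs_le.mp (hu.trans hr2))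
  rw [div_le_iff₀ (hmax u)] at h1
  calc |f u| ≤ K * max |u| L := h1
    _ ≤ K * r := mul_le_mul_of_nonneg_left (max_le hu hr1) hK0
    _ ≤ q * F * r := mul_le_mul_of_nonneg_right hq.le (hL.le.trans hr1)
    _ = q * (F * r) := by ring

/-! ### The infinite-delay term -/

lemma summable_of_tsum_abs_eq_one {z : ℕ → ℝ} (hz : ∑' l, |z l| = 1) :
    Summable fun l => |z l| := by
  by_contra hns
  rw [tsum_eq_zero_of_not_summable hns] at hz
  exact zero_ne_one hz

lemma abs_tsum_le_tsum {w v : ℕ → ℝ} (h : ∀ l, |w l| ≤ v l) (hv : Summable v) :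
    |∑' l, w l| ≤ ∑' l, v l :=
  tsum_of_norm_bounded (f := w) hv.hasSum h

lemma abs_tsum_kernel_le {z u : ℕ → ℝ} {s : ℝ} (hz : ∑' l, |z l| = 1) (hu : ∀ l, |u l| ≤ s) :
    |∑' l, z l * u l| ≤ s := by
  have hsum := summable_of_tsum_abs_eq_one hz
  refine (abs_tsum_le_tsum (v := fun l => |z l| * s) (fun l => ?_) (hsum.mul_right s)).trans ?_
  · rw [abs_mul]
    exact mul_le_mul_of_nonneg_left (hu l) (abs_nonneg _)
  · rw [tsum_mul_right, hz, one_mul]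

/-- Averaging a bounded sequence on `ℤ` against a summable kernel forgets the remote past: an
eventual bound `s` on the sequence is, up to `ε`, an eventual bound on the averages. By dominated
convergence, the averages of the excess `max (|u| - s) 0` tend to `0`. -/
lemma eventually_abs_tsum_kernel_le {z : ℕ → ℝ} {u : ℤ → ℝ} {s B ε : ℝ}
    (hz : ∑' l, |z l| = 1) (hB : ∀ m, |u m| ≤ B) (hs0 : 0 ≤ s)
    (hs : ∀ᶠ m : ℤ in Filter.atTop, |u m| ≤ s) (hε : 0 < ε) :
    ∀ᶠ m : ℕ in Filter.atTop, |∑' l : ℕ, z l * u ((m : ℤ) - l)| ≤ s + ε := by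
  have hsum := summable_of_tsum_abs_eq_one hz
  have hex : ∀ m : ℤ, 0 ≤ max (|u m| - s) 0 ∧ max (|u m| - s) 0 ≤ B := fun m =>
    ⟨le_max_right _ _, max_le (by linarith [hB m]) ((abs_nonneg _).trans (hB m))⟩
  have hbd : ∀ (m : ℕ) (l : ℕ), ‖|z l| * max (|u ((m : ℤ) - l)| - s) 0‖ ≤ |z l| * B := by
    intro m l
    rw [Real.norm_eq_abs, abs_of_nonneg (mul_nonneg (abs_nonneg _) (hex _).1)]
    exact mul_le_mul_of_nonneg_left (hex _).2 (abs_nonneg _)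
  have hlim : Filter.Tendsto (fun m : ℕ => ∑' l : ℕ, |z l| * max (|u ((m : ℤ) - l)| - s) 0)
      Filter.atTop (nhds (∑' _ : ℕ, (0 : ℝ))) := by
    refine tendsto_tsum_of_dominated_convergence (hsum.mul_right B) (fun l => ?_)
      (Filter.Eventually.of_forall hbd)
    have hm : Filter.Tendsto (fun m : ℕ => (m : ℤ) - l) Filter.atTop Filter.atTop :=
      Filter.tendsto_atTop_add_const_right _ (-(l : ℤ)) tendsto_natCast_atTop_atTop
    refine tendsto_const_nhds.congr' ?_
    filter_upwards [hm.eventually hs] with m hm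
    rw [max_eq_right (by linarith), mul_zero]
  rw [tsum_zero] at hlim
  filter_upwards [hlim.eventually_lt_const hε] with m hm
  have hsum2 : Summable fun l : ℕ => |z l| * max (|u ((m : ℤ) - l)| - s) 0 :=
    Summable.of_norm_bounded (hsum.mul_right B) (hbd m)
  refine (abs_tsum_le_tsum
    (v := fun l : ℕ => |z l| * s + |z l| * max (|u ((m : ℤ) - l)| - s) 0) (fun l => ?_)
    ((hsum.mul_right s).add hsum2)).trans ?_
  · rw [abs_mul, ← mul_add]
    refine mul_le_mul_of_nonneg_left ?_ (abs_nonneg _)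
    linarith [le_max_left (|u ((m : ℤ) - l)| - s) 0]
  · rw [(hsum.mul_right s).tsum_add hsum2, tsum_mul_right, hz, one_mul]
    linarith

/-! ### One step of the recursion -/

/-- Bound on one component of the right-hand side of the recursion when the arguments have
weighted size `r`, the nonlinearities have gain `q` relative to `F` and `G`, and the kernel sums
carry an extra error `ε`. -/
lemma abs_step_le {n P : ℕ} {a y r q ε A e I : ℝ} {d c s C G : Fin n → ℝ}
    {b φ B F : Fin n → Fin P → ℝ}
    (ha : |a| ≤ A) (hy : |y| ≤ r * e) (hb : ∀ j p, |b j p| ≤ B j p)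
    (hφ : ∀ j p, |φ j p| ≤ q * (F j p * (r * d j))) (hc : ∀ j, |c j| ≤ C j)
    (hs : ∀ j, |s j| ≤ q * (G j * (r * d j)) + ε) (hq : 0 ≤ q) (hr : 0 ≤ r)
    (hd : A * e + ∑ j, (C j * G j + ∑ p, B j p * F j p) * d j ≤ e) :
    |a * y + ∑ j, ∑ p, b j p * φ j p + ∑ j, c j * s j + I|
      ≤ (A + q * (1 - A)) * r * e + ε * ∑ j, C j + |I| := by
  have hmul : ∀ {x y X Y : ℝ}, |x| ≤ X → |y| ≤ Y → |x * y| ≤ X * Y := by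
    intro x y X Y hx hy
    rw [abs_mul]
    exact mul_le_mul hx hy (abs_nonneg _) ((abs_nonneg _).trans hx)
  have h1 : |a * y| ≤ A * (r * e) := hmul ha hy
  have h2 : |∑ j, ∑ p, b j p * φ j p| ≤ ∑ j, ∑ p, B j p * (q * (F j p * (r * d j))) :=
    (Finset.abs_sum_le_sum_abs _ _).trans <| Finset.sum_le_sum fun j _ =>
      (Finset.abs_sum_le_sum_abs _ _).trans <| Finset.sum_le_sum fun p _ =>
        hmul (hb j p) (hφ j p)
  have h3 : |∑ j, c j * s j| ≤ ∑ j, C j * (q * (G j * (r * d j)) + ε) :=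
    (Finset.abs_sum_le_sum_abs _ _).trans <| Finset.sum_le_sum fun j _ => hmul (hc j) (hs j)
  have h4 : ∑ j, ∑ p, B j p * (q * (F j p * (r * d j)))
      + ∑ j, C j * (q * (G j * (r * d j)) + ε)
      = q * r * ∑ j, (C j * G j + ∑ p, B j p * F j p) * d j + ε * ∑ j, C j := by
    rw [Finset.mul_sum, Finset.mul_sum, ← Finset.sum_add_distrib, ← Finset.sum_add_distrib]
    refine Finset.sum_congr rfl fun j _ => ?_
    have : ∑ p, B j p * (q * (F j p * (r * d j))) = (∑ p, B j p * F j p) * (q * r * d j) := by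
      rw [Finset.sum_mul]
      exact Finset.sum_congr rfl fun p _ => by ring
    rw [this]; ring
  have h5 : q * r * ∑ j, (C j * G j + ∑ p, B j p * F j p) * d j ≤ q * r * (e - A * e) :=
    mul_le_mul_of_nonneg_left (by linarith) (mul_nonneg hq hr)
  have h6 := abs_add_le (a * y + ∑ j, ∑ p, b j p * φ j p + ∑ j, c j * s j) I
  have h7 := abs_add_le (a * y + ∑ j, ∑ p, b j p * φ j p) (∑ j, c j * s j)
  have h8 := abs_add_le (a * y) (∑ j, ∑ p, b j p * φ j p)
  linarith [show (A + q * (1 - A)) * r * e = A * (r * e) + q * r * (e - A * e) by ring]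

lemma eventually_int_of_eventually_nat {p : ℤ → Prop}
    (h : ∀ᶠ m : ℕ in Filter.atTop, p ((m : ℤ) + 1)) : ∀ᶠ m : ℤ in Filter.atTop, p m := by
  obtain ⟨N, hN⟩ := Filter.eventually_atTop.mp h
  refine Filter.eventually_atTop.mpr ⟨(N : ℤ) + 1, fun m hm => ?_⟩
  have := hN (m - 1).toNat (by omega)
  rwa [Int.toNat_of_nonneg (by omega), sub_add_cancel] at this

/-! ### The recursion with a weight vector -/

section Recursion

variable {n P : ℕ} {a : Fin n → ℕ → ℝ} {ν : Fin n → ℕ → ℕ}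
  {b : Fin n → Fin n → Fin P → ℕ → ℝ} {τ : Fin n → Fin n → Fin P → ℕ → ℕ}
  {c : Fin n → Fin n → ℕ → ℝ} {ζ : Fin n → Fin n → ℕ → ℝ} {I : Fin n → ℕ → ℝ}
  {f : Fin n → Fin n → Fin P → ℝ → ℝ} {g : Fin n → Fin n → ℝ → ℝ}
  {F : Fin n → Fin n → Fin P → ℝ} {G : Fin n → Fin n → ℝ}
  {σ : ℕ} {x : ℤ → Fin n → ℝ}
  {A : Fin n → ℝ} {B : Fin n → Fin n → Fin P → ℝ} {C : Fin n → Fin n → ℝ} {d : Fin n → ℝ}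

/-- The weighted sup norm of the solution up to time `m + 1` exceeds that up to time `m` by at most
a multiple of the input at time `m`, and the inputs are summable. -/
lemma exists_weighted_bound (hn : 1 ≤ n)
    (hinit : ∃ B : ℝ, ∀ m : ℤ, m ≤ (σ : ℤ) → ‖x m‖ ≤ B)
    (hmodel : ∀ m : ℕ, σ ≤ m → ∀ i : Fin n,
      x ((m : ℤ) + 1) i =
        a i m * x ((m : ℤ) - ν i m) i
        + ∑ j, ∑ p, b i j p m * f i j p (x ((m : ℤ) - τ i j p m) j)
        + ∑ j, c i j m * ∑' l : ℕ, ζ i j l * g i j (x ((m : ℤ) - l) j)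
        + I i m)
    (ha : ∀ i m, |a i m| ≤ A i) (hb : ∀ i j p m, |b i j p m| ≤ B i j p)
    (hc : ∀ i j m, |c i j m| ≤ C i j) (hζ : ∀ i j, ∑' l : ℕ, |ζ i j l| = 1)
    (hI : ∀ i, Summable fun m : ℕ => |I i m|)
    (hF : ∀ i j p, 0 < F i j p) (hf : ∀ i j p u, |f i j p u| ≤ F i j p * |u|)
    (hG : ∀ i j, 0 < G i j) (hg : ∀ i j u, |g i j u| ≤ G i j * |u|)
    (hd0 : ∀ i, 0 < d i)
    (hd : ∀ i, A i * d i + ∑ j, (C i j * G i j + ∑ p, B i j p * F i j p) * d j ≤ d i) :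
    ∃ V : ℝ, 0 ≤ V ∧ ∀ (m : ℤ) (i : Fin n), |x m i| ≤ V * d i := by
  have : Nonempty (Fin n) := ⟨⟨0, hn⟩⟩
  obtain ⟨R, hR⟩ := hinit
  obtain ⟨k₀, hk₀⟩ := Finite.exists_min d
  set δ := d k₀ with hδ
  have hδ0 : 0 < δ := hd0 k₀
  have hscale : ∀ (y : ℝ) (i : Fin n), 0 ≤ y → y ≤ y / δ * d i := by
    intro y i hy
    calc y = y / δ * δ := by field_simp
      _ ≤ y / δ * d i := mul_le_mul_of_nonneg_left (hk₀ i) (by positivity)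
  set J : ℕ → ℝ := fun m => (∑ i, |I i m|) / δ with hJ
  have hJ0 : ∀ m, 0 ≤ J m := fun m => by positivity
  have hJs : Summable J := (summable_sum fun i _ => hI i).div_const δ
  have hIJ : ∀ i m, |I i m| ≤ J m * d i := fun i m =>
    (Finset.single_le_sum (f := fun i => |I i m|) (fun i _ => abs_nonneg _)
      (Finset.mem_univ i)).trans (hscale _ i (by positivity))
  have key : ∀ k : ℕ, ∀ m : ℤ, m ≤ (σ : ℤ) + k → ∀ i,
      |x m i| ≤ (|R| / δ + ∑ l ∈ Finset.range (σ + k), J l) * d i := by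
    intro k
    induction k with
    | zero =>
      intro m hm i
      have h1 : |x m i| ≤ |R| :=
        (norm_le_pi_norm (x m) i).trans ((hR m (by simpa using hm)).trans (le_abs_self R))
      refine (h1.trans (hscale _ i (abs_nonneg R))).trans ?_
      refine mul_le_mul_of_nonneg_right ?_ (hd0 i).le
      linarith [Finset.sum_nonneg fun l (_ : l ∈ Finset.range (σ + 0)) => hJ0 l]
    | succ k ih =>
      intro m hm i
      set V := |R| / δ + ∑ l ∈ Finset.range (σ + k), J l with hV
      have hV0 : 0 ≤ V := add_nonneg (by positivity) (Finset.sum_nonneg fun l _ => hJ0 l)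
      rw [← add_assoc, Finset.sum_range_succ, ← add_assoc, ← hV, add_mul]
      rcases lt_or_ge ((σ : ℤ) + k) m with hlt | hle
      · have hmeq : m = ((σ + k : ℕ) : ℤ) + 1 := by push_cast at hm ⊢; omega
        have hpast : ∀ (l : ℕ) j, |x (((σ + k : ℕ) : ℤ) - l) j| ≤ V * d j := fun l j =>
          ih _ (by push_cast; omega) j
        rw [hmeq, hmodel (σ + k) (by omega) i]
        have hstep := abs_step_le (I := I i (σ + k)) (q := 1) (ε := 0) (ha i (σ + k))
          (hpast (ν i (σ + k)) i)
          (fun j p => hb i j p (σ + k))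
          (φ := fun j p => f i j p (x (((σ + k : ℕ) : ℤ) - τ i j p (σ + k)) j))
          (fun j p => by
            rw [one_mul]
            exact (hf i j p _).trans (mul_le_mul_of_nonneg_left (hpast _ j) (hF i j p).le))
          (fun j => hc i j (σ + k))
          (s := fun j => ∑' l : ℕ, ζ i j l * g i j (x (((σ + k : ℕ) : ℤ) - l) j))
          (fun j => by
            rw [one_mul, add_zero]
            exact abs_tsum_kernel_le (hζ i j) fun l =>
              (hg i j _).trans (mul_le_mul_of_nonneg_left (hpast l j) (hG i j).le))
          zero_le_one hV0 (hd i)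
        refine hstep.trans ?_
        have := hIJ i (σ + k)
        linarith [show (A i + 1 * (1 - A i)) * V * d i = V * d i by ring]
      · exact (ih m hle i).trans (le_add_of_nonneg_right (mul_nonneg (hJ0 _) (hd0 i).le))
  refine ⟨|R| / δ + ∑' l, J l, add_nonneg (by positivity) (tsum_nonneg hJ0), fun m i => ?_⟩
  refine (key (m - σ).toNat m (by omega) i).trans (mul_le_mul_of_nonneg_right ?_ (hd0 i).le)
  linarith [hJs.sum_le_tsum (Finset.range (σ + (m - σ).toNat)) fun l _ => hJ0 l]

/-- A positive eventual weighted bound valid with an arbitrarily small margin can be improved. -/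
lemma exists_smaller_eventual_bound
    (hmodel : ∀ m : ℕ, σ ≤ m → ∀ i : Fin n,
      x ((m : ℤ) + 1) i =
        a i m * x ((m : ℤ) - ν i m) i
        + ∑ j, ∑ p, b i j p m * f i j p (x ((m : ℤ) - τ i j p m) j)
        + ∑ j, c i j m * ∑' l : ℕ, ζ i j l * g i j (x ((m : ℤ) - l) j)
        + I i m)
    (ha : ∀ i m, |a i m| ≤ A i) (hA1 : ∀ i, A i < 1)
    (hν : ∀ i, Filter.Tendsto (fun m : ℕ => (m : ℤ) - ν i m) Filter.atTop Filter.atTop)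
    (hτ : ∀ i j p,
      Filter.Tendsto (fun m : ℕ => (m : ℤ) - τ i j p m) Filter.atTop Filter.atTop)
    (hb : ∀ i j p m, |b i j p m| ≤ B i j p)
    (hc : ∀ i j m, |c i j m| ≤ C i j) (hζ : ∀ i j, ∑' l : ℕ, |ζ i j l| = 1)
    (hI : ∀ i, Summable fun m : ℕ => |I i m|)
    (hH6f : ∀ i j p, Continuous (f i j p) ∧ 0 < F i j p ∧
      ∀ u : ℝ, u ≠ 0 → |f i j p u| < F i j p * |u|)
    (hH6g : ∀ i j, Continuous (g i j) ∧ 0 < G i j ∧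
      ∀ u : ℝ, u ≠ 0 → |g i j u| < G i j * |u|)
    (hd0 : ∀ i, 0 < d i)
    (hd : ∀ i, A i * d i + ∑ j, (C i j * G i j + ∑ p, B i j p * F i j p) * d j ≤ d i)
    {V : ℝ} (hV : ∀ (m : ℤ) (i : Fin n), |x m i| ≤ V * d i)
    {L : ℝ} (hL : 0 < L)
    (hev : ∀ r, L < r → ∀ᶠ m : ℤ in Filter.atTop, ∀ i, |x m i| ≤ r * d i) :
    ∃ L', 0 ≤ L' ∧ L' < L ∧ ∀ᶠ m : ℤ in Filter.atTop, ∀ i, |x m i| ≤ L' * d i := by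
  -- a common gain `q < 1` for all activation functions
  obtain ⟨q, ⟨⟨hqf, hqg⟩, hq0⟩, hq1⟩ :
      ∃ q : ℝ, (((∀ i j p, ∀ r, L * d j ≤ r → r ≤ 2 * (L * d j) → ∀ u, |u| ≤ r →
          |f i j p u| ≤ q * (F i j p * r)) ∧
        (∀ i j, ∀ r, L * d j ≤ r → r ≤ 2 * (L * d j) → ∀ u, |u| ≤ r →
          |g i j u| ≤ q * (G i j * r))) ∧ 0 < q) ∧ q < 1 := by
    have hE1 : ∀ᶠ q in nhdsWithin (1 : ℝ) (Set.Iio 1), ∀ i j p, ∀ r, L * d j ≤ r →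
        r ≤ 2 * (L * d j) → ∀ u, |u| ≤ r → |f i j p u| ≤ q * (F i j p * r) := by
      simp only [Filter.eventually_all]
      exact fun i j p => by
        simpa only [Filter.eventually_all] using
          eventually_gain (hH6f i j p).1 (hH6f i j p).2.1 (hH6f i j p).2.2 (mul_pos hL (hd0 j))
    have hE2 : ∀ᶠ q in nhdsWithin (1 : ℝ) (Set.Iio 1), ∀ i j, ∀ r, L * d j ≤ r →
        r ≤ 2 * (L * d j) → ∀ u, |u| ≤ r → |g i j u| ≤ q * (G i j * r) := by
      simp only [Filter.eventually_all]
      exact fun i j => by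
        simpa only [Filter.eventually_all] using
          eventually_gain (hH6g i j).1 (hH6g i j).2.1 (hH6g i j).2.2 (mul_pos hL (hd0 j))
    have hE3 : ∀ᶠ q in nhdsWithin (1 : ℝ) (Set.Iio 1), 0 < q :=
      Filter.Eventually.filter_mono nhdsWithin_le_nhds (lt_mem_nhds one_pos)
    exact (((hE1.and hE2).and hE3).and self_mem_nhdsWithin).exists
  -- a radius `r > L` which every row of the recursion contracts below `L`
  obtain ⟨r, ⟨hrθ, hr2⟩, hrL⟩ :
      ∃ r : ℝ, ((∀ i, (A i + q * (1 - A i)) * r < L) ∧ r < 2 * L) ∧ L < r := by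
    have hE1 : ∀ᶠ r in nhdsWithin L (Set.Ioi L), ∀ i, (A i + q * (1 - A i)) * r < L := by
      rw [Filter.eventually_all]
      intro i
      refine Filter.Eventually.filter_mono nhdsWithin_le_nhds ?_
      have : Filter.Tendsto (fun r : ℝ => (A i + q * (1 - A i)) * r) (nhds L)
          (nhds ((A i + q * (1 - A i)) * L)) := Filter.tendsto_id.const_mul _
      refine this.eventually_lt_const ?_
      have h1 : A i + q * (1 - A i) < 1 := by nlinarith [hA1 i]
      nlinarith
    have hE2 : ∀ᶠ r in nhdsWithin L (Set.Ioi L), r < 2 * L :=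
      Filter.Eventually.filter_mono nhdsWithin_le_nhds (gt_mem_nhds (by linarith))
    exact ((hE1.and hE2).and self_mem_nhdsWithin).exists
  obtain ⟨L', ⟨hL'θ, hL'0⟩, hL'L⟩ :
      ∃ L' : ℝ, ((∀ i, (A i + q * (1 - A i)) * r < L') ∧ 0 < L') ∧ L' < L := by
    have hE1 : ∀ᶠ s in nhdsWithin L (Set.Iio L), ∀ i, (A i + q * (1 - A i)) * r < s := by
      rw [Filter.eventually_all]
      exact fun i => Filter.Eventually.filter_mono nhdsWithin_le_nhds (lt_mem_nhds (hrθ i))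
    have hE2 : ∀ᶠ s in nhdsWithin L (Set.Iio L), 0 < s :=
      Filter.Eventually.filter_mono nhdsWithin_le_nhds (lt_mem_nhds hL)
    exact ((hE1.and hE2).and self_mem_nhdsWithin).exists
  refine ⟨L', hL'0.le, hL'L, ?_⟩
  rw [Filter.eventually_all]
  intro i
  apply eventually_int_of_eventually_nat
  -- `ε` bounds both the kernel error and the external input
  obtain ⟨ε, hεle, hε0⟩ : ∃ ε : ℝ,
      (A i + q * (1 - A i)) * r * d i + ε * ∑ j, C i j + ε < L' * d i ∧ 0 < ε := by
    have hE : ∀ᶠ ε in nhdsWithin (0 : ℝ) (Set.Ioi 0),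
        (A i + q * (1 - A i)) * r * d i + ε * ∑ j, C i j + ε < L' * d i := by
      refine Filter.Eventually.filter_mono nhdsWithin_le_nhds ?_
      have hct : Continuous fun ε : ℝ =>
          (A i + q * (1 - A i)) * r * d i + ε * ∑ j, C i j + ε := by fun_prop
      refine (hct.tendsto 0).eventually_lt_const ?_
      simpa using mul_lt_mul_of_pos_right (hL'θ i) (hd0 i)
    exact (hE.and self_mem_nhdsWithin).exists
  have hr0 : 0 < r := hL.trans hrL
  have hx := hev r hrL
  have hrd : ∀ j, L * d j ≤ r * d j ∧ r * d j ≤ 2 * (L * d j) := fun j =>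
    ⟨mul_le_mul_of_nonneg_right hrL.le (hd0 j).le, by nlinarith [hd0 j]⟩
  have hE1 : ∀ᶠ m : ℕ in Filter.atTop, |x ((m : ℤ) - ν i m) i| ≤ r * d i :=
    (hν i).eventually (hx.mono fun m hm => hm i)
  have hE2 : ∀ᶠ m : ℕ in Filter.atTop, ∀ j p, |x ((m : ℤ) - τ i j p m) j| ≤ r * d j := by
    simp only [Filter.eventually_all]
    exact fun j p => (hτ i j p).eventually (hx.mono fun m hm => hm j)
  have hE3 : ∀ᶠ m : ℕ in Filter.atTop, ∀ j,
      |∑' l : ℕ, ζ i j l * g i j (x ((m : ℤ) - l) j)| ≤ q * (G i j * (r * d j)) + ε := by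
    rw [Filter.eventually_all]
    intro j
    refine eventually_abs_tsum_kernel_le (u := fun m => g i j (x m j)) (B := G i j * (V * d j))
      (hζ i j) (fun m => ?_) ?_ ?_ hε0
    · exact (abs_le_mul_abs_of_lt (hH6g i j).1 (hH6g i j).2.2 _).trans
        (mul_le_mul_of_nonneg_left (hV m j) (hH6g i j).2.1.le)
    · exact mul_nonneg hq0.le (mul_nonneg (hH6g i j).2.1.le (mul_nonneg hr0.le (hd0 j).le))
    · exact hx.mono fun m hm => hqg i j _ (hrd j).1 (hrd j).2 _ (hm j)
  have hE4 : ∀ᶠ m : ℕ in Filter.atTop, |I i m| < ε :=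
    (hI i).tendsto_atTop_zero.eventually_lt_const hε0
  filter_upwards [hE1, hE2, hE3, hE4, Filter.eventually_ge_atTop σ] with m h1 h2 h3 h4 hm
  rw [hmodel m hm i]
  have hstep := abs_step_le (I := I i m) (ha i m) h1 (fun j p => hb i j p m)
    (φ := fun j p => f i j p (x ((m : ℤ) - τ i j p m) j))
    (fun j p => hqf i j p _ (hrd j).1 (hrd j).2 _ (h2 j p))
    (fun j => hc i j m)
    (s := fun j => ∑' l : ℕ, ζ i j l * g i j (x ((m : ℤ) - l) j)) h3 hq0.le hr0.le (hd i)
  linarith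

end Recursion

/-- Theorem 3.1, item ii: under (H1)-(H5), (H6*), if the matrix `M⁺` is a singular
irreducible M-matrix, then every solution of model (1) with bounded initial condition
tends to `0` in the max norm. -/
theorem global_attractivity_H6star_Mplus_singular_irreducible
    (n P : ℕ) (hn : 1 ≤ n) (hP : 1 ≤ P)
    (a : Fin n → ℕ → ℝ) (ν : Fin n → ℕ → ℕ)
    (b : Fin n → Fin n → Fin P → ℕ → ℝ)
    (τ : Fin n → Fin n → Fin P → ℕ → ℕ)
    (c : Fin n → Fin n → ℕ → ℝ)
    (ζ : Fin n → Fin n → ℕ → ℝ)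
    (I : Fin n → ℕ → ℝ)
    (f : Fin n → Fin n → Fin P → ℝ → ℝ)
    (g : Fin n → Fin n → ℝ → ℝ)
    (F : Fin n → Fin n → Fin P → ℝ)
    (G : Fin n → Fin n → ℝ)
    (σ : ℕ) (x : ℤ → Fin n → ℝ)
    -- `x` has bounded initial condition: it is bounded on `(-∞, σ] ∩ ℤ`
    (hinit : ∃ B : ℝ, ∀ m : ℤ, m ≤ (σ : ℤ) → ‖x m‖ ≤ B)
    -- the inner series converge absolutely
    (habs : ∀ (i j : Fin n) (m : ℤ), Summable fun l : ℕ => |ζ i j l * g i j (x (m - l) j)|)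
    -- `x` is a solution of model (1) from the initial time `σ` on
    (hmodel : ∀ m : ℕ, σ ≤ m → ∀ i : Fin n,
      x ((m : ℤ) + 1) i =
        a i m * x ((m : ℤ) - ν i m) i
        + ∑ j, ∑ p, b i j p m * f i j p (x ((m : ℤ) - τ i j p m) j)
        + ∑ j, c i j m * ∑' l : ℕ, ζ i j l * g i j (x ((m : ℤ) - l) j)
        + I i m)
    -- (H1)
    (hH1 : ∀ i, BddAbove (Set.range fun m : ℕ => |a i m|) ∧ (⨆ m : ℕ, |a i m|) < 1)
    -- (H2)
    (hH2ν : ∀ i, Filter.Tendsto (fun m : ℕ => (m : ℤ) - ν i m) Filter.atTop Filter.atTop)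
    (hH2τ : ∀ i j p,
      Filter.Tendsto (fun m : ℕ => (m : ℤ) - τ i j p m) Filter.atTop Filter.atTop)
    -- (H3)
    (hH3b : ∀ i j p, BddAbove (Set.range fun m : ℕ => |b i j p m|))
    (hH3c : ∀ i j, BddAbove (Set.range fun m : ℕ => |c i j m|))
    -- (H4)
    (hH4 : ∀ i j, ∑' l : ℕ, |ζ i j l| = 1)
    -- (H5)
    (hH5 : ∀ i, Summable fun m : ℕ => |I i m|)
    -- (H6*)
    (hH6f : ∀ i j p, Continuous (f i j p) ∧ 0 < F i j p ∧
      ∀ u : ℝ, u ≠ 0 → |f i j p u| < F i j p * |u|)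
    (hH6g : ∀ i j, Continuous (g i j) ∧ 0 < G i j ∧
      ∀ u : ℝ, u ≠ 0 → |g i j u| < G i j * |u|)
    -- `M⁺` is a singular irreducible M-matrix
    (hM : IsMMatrix (Matrix.of fun i j : Fin n =>
        (if i = j then 1 - (⨆ m : ℕ, |a i m|) else 0)
        - ((⨆ m : ℕ, |c i j m|) * G i j + ∑ p, (⨆ m : ℕ, |b i j p m|) * F i j p)))
    (hMsing : (Matrix.of fun i j : Fin n =>
        (if i = j then 1 - (⨆ m : ℕ, |a i m|) else 0)
        - ((⨆ m : ℕ, |c i j m|) * G i j + ∑ p, (⨆ m : ℕ, |b i j p m|) * F i j p)).det = 0)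
    (hMirr : ¬ IsReducible (Matrix.of fun i j : Fin n =>
        (if i = j then 1 - (⨆ m : ℕ, |a i m|) else 0)
        - ((⨆ m : ℕ, |c i j m|) * G i j + ∑ p, (⨆ m : ℕ, |b i j p m|) * F i j p)))
    :
    Filter.Tendsto (fun m : ℤ => ‖x m‖) Filter.atTop (nhds 0) := by
  set M := (Matrix.of fun i j : Fin n =>
        (if i = j then 1 - (⨆ m : ℕ, |a i m|) else 0)
        - ((⨆ m : ℕ, |c i j m|) * G i j + ∑ p, (⨆ m : ℕ, |b i j p m|) * F i j p)) with hMdef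
  obtain ⟨d, hd0, hMd⟩ := hM.exists_pos_vec hn hMirr
  set A : Fin n → ℝ := fun i => ⨆ m : ℕ, |a i m| with hA
  set B : Fin n → Fin n → Fin P → ℝ := fun i j p => ⨆ m : ℕ, |b i j p m| with hB
  set C : Fin n → Fin n → ℝ := fun i j => ⨆ m : ℕ, |c i j m| with hC
  have ha : ∀ i m, |a i m| ≤ A i := fun i m => le_ciSup (hH1 i).1 m
  have hb : ∀ i j p m, |b i j p m| ≤ B i j p := fun i j p m => le_ciSup (hH3b i j p) m
  have hc : ∀ i j m, |c i j m| ≤ C i j := fun i j m => le_ciSup (hH3c i j) m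
  have hd : ∀ i, A i * d i + ∑ j, (C i j * G i j + ∑ p, B i j p * F i j p) * d j ≤ d i := by
    intro i
    have h := hMd i
    simp only [hMdef, Matrix.of_apply, sub_mul, Finset.sum_sub_distrib, ite_mul, zero_mul,
      Finset.sum_ite_eq, Finset.mem_univ, if_true, one_mul] at h
    linarith
  obtain ⟨V, hV0, hV⟩ := exists_weighted_bound hn hinit hmodel ha hb hc hH4 hH5
    (fun i j p => (hH6f i j p).2.1)
    (fun i j p => abs_le_mul_abs_of_lt (hH6f i j p).1 (hH6f i j p).2.2)
    (fun i j => (hH6g i j).2.1)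
    (fun i j => abs_le_mul_abs_of_lt (hH6g i j).1 (hH6g i j).2.2) hd0 hd
  -- `L` is the limit superior of `max_i |x_i| / d_i`
  set E : Set ℝ := {r | 0 ≤ r ∧ ∀ᶠ m : ℤ in Filter.atTop, ∀ i, |x m i| ≤ r * d i} with hE
  have hEne : E.Nonempty := ⟨V, hV0, Filter.Eventually.of_forall hV⟩
  have hEbd : BddBelow E := ⟨0, fun r hr => hr.1⟩
  set L := sInf E with hL
  have hL0 : 0 ≤ L := le_csInf hEne fun r hr => hr.1
  have hev : ∀ r, L < r → ∀ᶠ m : ℤ in Filter.atTop, ∀ i, |x m i| ≤ r * d i := by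
    intro r hr
    obtain ⟨s, hs, hsr⟩ := exists_lt_of_csInf_lt hEne hr
    exact hs.2.mono fun m hm i =>
      (hm i).trans (mul_le_mul_of_nonneg_right hsr.le (hd0 i).le)
  have hLz : L = 0 := by
    by_contra hne
    obtain ⟨L', hL'0, hL'L, hL'⟩ := exists_smaller_eventual_bound hmodel ha
      (fun i => (hH1 i).2) hH2ν hH2τ hb hc hH4 hH5 hH6f hH6g hd0 hd hV
      (lt_of_le_of_ne hL0 (Ne.symm hne)) hev
    exact absurd (csInf_le hEbd (show L' ∈ E from ⟨hL'0, hL'⟩)) (not_le.mpr hL'L)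
  have hx0 : Filter.Tendsto x Filter.atTop (nhds 0) := by
    rw [tendsto_pi_nhds]
    intro i
    rw [Metric.tendsto_nhds]
    intro ε hε
    have hr : L < ε / 2 / d i := by rw [hLz]; exact div_pos (half_pos hε) (hd0 i)
    filter_upwards [hev _ hr] with m hm
    have := hm i
    rw [div_mul_cancel₀ _ (hd0 i).ne'] at this
    rw [Pi.zero_apply, dist_zero_right, Real.norm_eq_abs]
    linarith
  simpa using hx0.norm
end

section
/- Assume hypotheses (H1)–(H5) and (H6). Then every solution x : ℤ → ℝⁿ of model (1) with initial time σ ∈ ℕ and bounded initial condition is bounded on ℤ. (Lemma 3.1, item i.) -/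
/-!
Each activation function is globally bounded: by `F` (or `G`) away from the origin, hence also at
the origin by continuity (`abs_le_of_pieces`). As the kernel coefficients have total mass one, all
terms of the right-hand side other than `a_i(m) x_i(m - ν_i(m))` are then bounded by a constant
`K_i`, and `|x_i(m+1)| ≤ α_i |x_i(m - ν_i(m))| + K_i` with `α_i = sup |a_i| < 1`. Any
`M ≥ K_i / (1 - α_i)` that dominates the initial condition therefore propagates as a bound, by
induction on time.
-/

/-- At the origin the bound comes from continuity, since `{0}ᶜ` is dense in `ℝ`. -/
lemma abs_le_of_pieces {h : ℝ → ℝ} {H : ℝ} (hc : Continuous h) (hH : 0 < H)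
    (h1 : ∀ u : ℝ, 1 < |u| → |h u| ≤ H)
    (h2 : ∀ u : ℝ, u ≠ 0 → |u| ≤ 1 → |h u| < H * |u|) (u : ℝ) : |h u| ≤ H := by
  have hcl : IsClosed {u : ℝ | |h u| ≤ H} := isClosed_le hc.abs continuous_const
  have hsub : ({0}ᶜ : Set ℝ) ⊆ {u : ℝ | |h u| ≤ H} := by
    intro v hv
    rcases lt_or_ge 1 |v| with hv1 | hv1
    · exact h1 v hv1
    · exact (h2 v hv hv1).le.trans (mul_le_of_le_one_right hH.le hv1)
  exact hcl.closure_subset_iff.mpr hsub (dense_compl_singleton (0 : ℝ) u)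

lemma abs_tsum_mul_le_s2 {z y : ℕ → ℝ} {H : ℝ} (hz : ∑' l, |z l| = 1) (hy : ∀ l, |y l| ≤ H)
    (hs : Summable fun l => |z l * y l|) : |∑' l, z l * y l| ≤ H := by
  -- a non-summable family would have the junk sum `0 ≠ 1`
  have hzs : Summable fun l => |z l| := by
    by_contra hn
    rw [tsum_eq_zero_of_not_summable hn] at hz
    exact zero_ne_one hz
  calc |∑' l, z l * y l| ≤ ∑' l, |z l * y l| := by
        simpa only [Real.norm_eq_abs] using norm_tsum_le_tsum_norm (f := fun l => z l * y l) hs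
    _ ≤ ∑' l, |z l| * H := by
        refine hs.tsum_le_tsum (fun l => ?_) (hzs.mul_right H)
        rw [abs_mul]
        exact mul_le_mul_of_nonneg_left (hy l) (abs_nonneg _)
    _ = H := by rw [tsum_mul_right, hz, one_mul]


/-- Lemma 3.1, item i: under (H1)-(H5) and (H6), every solution of model (1) with
bounded initial condition is bounded on `ℤ`. -/
theorem solutions_bounded_H6
    (n P : ℕ) (hn : 1 ≤ n) (hP : 1 ≤ P)
    (a : Fin n → ℕ → ℝ) (ν : Fin n → ℕ → ℕ)
    (b : Fin n → Fin n → Fin P → ℕ → ℝ)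
    (τ : Fin n → Fin n → Fin P → ℕ → ℕ)
    (c : Fin n → Fin n → ℕ → ℝ)
    (ζ : Fin n → Fin n → ℕ → ℝ)
    (I : Fin n → ℕ → ℝ)
    (f : Fin n → Fin n → Fin P → ℝ → ℝ)
    (g : Fin n → Fin n → ℝ → ℝ)
    (F : Fin n → Fin n → Fin P → ℝ)
    (G : Fin n → Fin n → ℝ)
    (σ : ℕ) (x : ℤ → Fin n → ℝ)
    -- `x` has bounded initial condition: it is bounded on `(-∞, σ] ∩ ℤ`
    (hinit : ∃ B : ℝ, ∀ m : ℤ, m ≤ (σ : ℤ) → ‖x m‖ ≤ B)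
    -- the inner series converge absolutely
    (habs : ∀ (i j : Fin n) (m : ℤ), Summable fun l : ℕ => |ζ i j l * g i j (x (m - l) j)|)
    -- `x` is a solution of model (1) from the initial time `σ` on
    (hmodel : ∀ m : ℕ, σ ≤ m → ∀ i : Fin n,
      x ((m : ℤ) + 1) i =
        a i m * x ((m : ℤ) - ν i m) i
        + ∑ j, ∑ p, b i j p m * f i j p (x ((m : ℤ) - τ i j p m) j)
        + ∑ j, c i j m * ∑' l : ℕ, ζ i j l * g i j (x ((m : ℤ) - l) j)
        + I i m)
    -- (H1)
    (hH1 : ∀ i, BddAbove (Set.range fun m : ℕ => |a i m|) ∧ (⨆ m : ℕ, |a i m|) < 1)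
    -- (H2)
    (hH2ν : ∀ i, Filter.Tendsto (fun m : ℕ => (m : ℤ) - ν i m) Filter.atTop Filter.atTop)
    (hH2τ : ∀ i j p,
      Filter.Tendsto (fun m : ℕ => (m : ℤ) - τ i j p m) Filter.atTop Filter.atTop)
    -- (H3)
    (hH3b : ∀ i j p, BddAbove (Set.range fun m : ℕ => |b i j p m|))
    (hH3c : ∀ i j, BddAbove (Set.range fun m : ℕ => |c i j m|))
    -- (H4)
    (hH4 : ∀ i j, ∑' l : ℕ, |ζ i j l| = 1)
    -- (H5)
    (hH5 : ∀ i, Summable fun m : ℕ => |I i m|)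
    -- (H6)
    (hH6f : ∀ i j p, Continuous (f i j p) ∧ 0 < F i j p ∧
      (∀ u : ℝ, 1 < |u| → |f i j p u| ≤ F i j p) ∧
      (∀ u : ℝ, u ≠ 0 → |u| ≤ 1 → |f i j p u| < F i j p * |u|))
    (hH6g : ∀ i j, Continuous (g i j) ∧ 0 < G i j ∧
      (∀ u : ℝ, 1 < |u| → |g i j u| ≤ G i j) ∧
      (∀ u : ℝ, u ≠ 0 → |u| ≤ 1 → |g i j u| < G i j * |u|))
    :
    ∃ B : ℝ, ∀ m : ℤ, ‖x m‖ ≤ B := by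
  obtain ⟨B, hB⟩ := hinit
  choose β hβ using fun i j p => hH3b i j p
  choose γ hγ using fun i j => hH3c i j
  have hβ' : ∀ i j p m, |b i j p m| ≤ β i j p := fun i j p m => hβ i j p ⟨m, rfl⟩
  have hγ' : ∀ i j m, |c i j m| ≤ γ i j := fun i j m => hγ i j ⟨m, rfl⟩
  have hf : ∀ i j p u, |f i j p u| ≤ F i j p := fun i j p =>
    abs_le_of_pieces (hH6f i j p).1 (hH6f i j p).2.1 (hH6f i j p).2.2.1 (hH6f i j p).2.2.2
  have hg : ∀ i j u, |g i j u| ≤ G i j := fun i j =>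
    abs_le_of_pieces (hH6g i j).1 (hH6g i j).2.1 (hH6g i j).2.2.1 (hH6g i j).2.2.2
  set α : Fin n → ℝ := fun i => ⨆ m : ℕ, |a i m| with hα
  have ha : ∀ i m, |a i m| ≤ α i := fun i m => le_ciSup (hH1 i).1 m
  have hα1 : ∀ i, 0 < 1 - α i := fun i => sub_pos.mpr (hH1 i).2
  set K : Fin n → ℝ := fun i =>
    ∑ j, ∑ p, β i j p * F i j p + ∑ j, γ i j * G i j + ∑' m, |I i m| with hK
  have hstep : ∀ m : ℕ, σ ≤ m → ∀ i,
      |x ((m : ℤ) + 1) i| ≤ α i * |x ((m : ℤ) - ν i m) i| + K i := by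
    intro m hm i
    have e1 : |a i m * x ((m : ℤ) - ν i m) i| ≤ α i * |x ((m : ℤ) - ν i m) i| := by
      rw [abs_mul]
      exact mul_le_mul_of_nonneg_right (ha i m) (abs_nonneg _)
    have e2 : |∑ j, ∑ p, b i j p m * f i j p (x ((m : ℤ) - τ i j p m) j)|
        ≤ ∑ j, ∑ p, β i j p * F i j p := by
      refine (Finset.abs_sum_le_sum_abs _ _).trans (Finset.sum_le_sum fun j _ => ?_)
      refine (Finset.abs_sum_le_sum_abs _ _).trans (Finset.sum_le_sum fun p _ => ?_)
      rw [abs_mul]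
      exact mul_le_mul (hβ' i j p m) (hf i j p _) (abs_nonneg _)
        ((abs_nonneg _).trans (hβ' i j p m))
    have e3 : |∑ j, c i j m * ∑' l : ℕ, ζ i j l * g i j (x ((m : ℤ) - l) j)|
        ≤ ∑ j, γ i j * G i j := by
      refine (Finset.abs_sum_le_sum_abs _ _).trans (Finset.sum_le_sum fun j _ => ?_)
      rw [abs_mul]
      exact mul_le_mul (hγ' i j m)
        (abs_tsum_mul_le_s2 (hH4 i j) (fun l => hg i j _) (habs i j m)) (abs_nonneg _)
        ((abs_nonneg _).trans (hγ' i j m))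
    have e4 : |I i m| ≤ ∑' m, |I i m| := (hH5 i).le_tsum m fun _ _ => abs_nonneg _
    rw [hmodel m hm i]
    refine (abs_add_le _ _).trans ?_
    have t1 := abs_add_le (a i m * x ((m : ℤ) - ν i m) i
      + ∑ j, ∑ p, b i j p m * f i j p (x ((m : ℤ) - τ i j p m) j))
      (∑ j, c i j m * ∑' l : ℕ, ζ i j l * g i j (x ((m : ℤ) - l) j))
    have t2 := abs_add_le (a i m * x ((m : ℤ) - ν i m) i)
      (∑ j, ∑ p, b i j p m * f i j p (x ((m : ℤ) - τ i j p m) j))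
    simp only [hK]
    linarith
  set M : ℝ := |B| + ∑ i, |K i / (1 - α i)| with hM
  have hM0 : 0 ≤ M := by positivity
  have hBM : B ≤ M := (le_abs_self B).trans
    (le_add_of_nonneg_right (Finset.sum_nonneg fun _ _ => abs_nonneg _))
  have hKM : ∀ i, α i * M + K i ≤ M := by
    intro i
    have h1 : K i / (1 - α i) ≤ M :=
      (le_abs_self _).trans <| (Finset.single_le_sum (f := fun i => |K i / (1 - α i)|)
        (fun _ _ => abs_nonneg _) (Finset.mem_univ i)).trans
          (le_add_of_nonneg_left (abs_nonneg B))
    rw [div_le_iff₀ (hα1 i)] at h1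
    linarith
  -- the delay may reach arbitrarily far back, so the bound is carried on all of `(-∞, σ + k]`
  have hind : ∀ k : ℕ, ∀ m : ℤ, m ≤ (σ : ℤ) + k → ‖x m‖ ≤ M := by
    intro k
    induction k with
    | zero => exact fun m hm => (hB m (by simpa using hm)).trans hBM
    | succ k ih =>
      intro m hm
      rcases le_or_gt m ((σ : ℤ) + k) with hmk | hmk
      · exact ih m hmk
      · obtain rfl : m = ((σ + k : ℕ) : ℤ) + 1 := by push_cast at hm ⊢; omega
        refine (pi_norm_le_iff_of_nonneg hM0).mpr fun i => ?_
        have hprev : |x (((σ + k : ℕ) : ℤ) - ν i (σ + k)) i| ≤ M :=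
          (norm_le_pi_norm (x _) i).trans (ih _ (by push_cast; omega))
        have hα0 : 0 ≤ α i := (abs_nonneg _).trans (ha i 0)
        calc ‖x (((σ + k : ℕ) : ℤ) + 1) i‖
            ≤ α i * |x (((σ + k : ℕ) : ℤ) - ν i (σ + k)) i| + K i :=
              hstep (σ + k) (Nat.le_add_right _ _) i
          _ ≤ α i * M + K i := by gcongr
          _ ≤ M := hKM i
  exact ⟨M, fun m => hind (m - σ).toNat m (by omega)⟩
end

section
/- Assume hypotheses (H1)–(H5) and (H6*), and assume that M⁺ is a singular irreducible M-matrix. Then every solution x : ℤ → ℝⁿ of model (1) with initial time σ ∈ ℕ and bounded initial condition is bounded on ℤ. (Lemma 3.1, item ii.) -/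
open Filter Topology

/-- Pivoting on the corner entry, increased by `ε`: the Schur complement has
determinant expressed through two minors of the unperturbed matrix. -/
lemma det_schur_perturbed {k : ℕ} (M : Matrix (Fin (k + 1)) (Fin (k + 1)) ℝ) (ε : ℝ)
    (h : M 0 0 + ε ≠ 0) :
    (M 0 0 + ε) * (Matrix.of fun i j : Fin k =>
        M i.succ j.succ - M i.succ 0 * M 0 j.succ / (M 0 0 + ε)).det
      = M.det + ε * (M.submatrix Fin.succ Fin.succ).det := by
  set N : Matrix (Fin (k + 1)) (Fin (k + 1)) ℝ :=
    M.updateRow 0 (M 0 + ε • Pi.single 0 1) with hN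
  have hN0 : ∀ j, N 0 j = M 0 j + ε * (Pi.single 0 1 : Fin (k + 1) → ℝ) j := by
    intro j; simp [hN]
  have hNs : ∀ (i : Fin k) j, N i.succ j = M i.succ j := by
    intro i j; simp [hN, Matrix.updateRow_ne]
  have h1 : N.det = M.det + ε * (M.submatrix Fin.succ Fin.succ).det := by
    rw [hN, Matrix.det_updateRow_add, Matrix.det_updateRow_smul, Matrix.updateRow_eq_self]
    congr 2
    rw [Matrix.det_succ_row_zero, Fin.sum_univ_succ]
    simp
    congr 1
  -- Clear the first column below the pivot.
  set R : Matrix (Fin (k + 1)) (Fin (k + 1)) ℝ := Matrix.of fun i j =>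
    N i j - (if i = 0 then 0 else M i 0 / (M 0 0 + ε)) * N 0 j with hR
  have hNR : N.det = R.det := by
    refine Matrix.det_eq_of_forall_row_eq_smul_add_const
      (fun i => if i = 0 then 0 else M i 0 / (M 0 0 + ε)) 0 (by simp) ?_
    intro i j
    simp [hR]
  rw [← h1, hNR, Matrix.det_succ_column_zero, Fin.sum_univ_succ]
  have hz : ∀ i : Fin k, R i.succ 0 = 0 := by
    intro i
    simp [hR, hN0, hNs, h]
  have h00 : R 0 0 = M 0 0 + ε := by simp [hR, hN0]
  simp only [hz, h00]
  simp only [Fin.val_zero, pow_zero, one_mul, mul_zero, zero_mul, Finset.sum_const_zero, add_zero]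
  congr 2
  ext i j
  simp [hR, hN0, hNs]
  ring

/-- A matrix with nonpositive off-diagonal entries and nonnegative principal minors, indexed here
by injections rather than subsets, is almost semipositive: after adding `ε` to the
diagonal it maps some point of the simplex to a nonnegative vector. -/
lemma exists_simplex_perturbed (n : ℕ) (A : Matrix (Fin (n + 1)) (Fin (n + 1)) ℝ)
    (hZ : ∀ i j, i ≠ j → A i j ≤ 0)
    (hP : ∀ (k : ℕ) (e : Fin k → Fin (n + 1)), Function.Injective e →
      0 ≤ (A.submatrix e e).det)
    (ε : ℝ) (hε : 0 < ε) :
    ∃ v : Fin (n + 1) → ℝ, v ∈ stdSimplex ℝ (Fin (n + 1)) ∧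
      ∀ i, 0 ≤ (∑ j, A i j * v j) + ε * v i := by
  induction n with
  | zero =>
    refine ⟨fun _ => 1, ⟨fun _ => zero_le_one, by simp⟩, ?_⟩
    intro i
    have h := hP 1 (fun _ => 0) (fun _ _ _ => Subsingleton.elim _ _)
    obtain rfl : i = 0 := Fin.fin_one_eq_zero i
    simp at h ⊢
    linarith
  | succ n ih =>
    have h00 : 0 ≤ A 0 0 := by
      have h := hP 1 (fun _ => 0) (fun _ _ _ => Subsingleton.elim _ _)
      simpa using h
    have hp : 0 < A 0 0 + ε := by linarith
    have hs0 : ∀ i : Fin (n + 1), A i.succ 0 ≤ 0 := fun i => hZ _ _ (Fin.succ_ne_zero i)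
    have h0s : ∀ i : Fin (n + 1), A 0 i.succ ≤ 0 := fun i => hZ _ _ (Fin.succ_ne_zero i).symm
    obtain ⟨w, ⟨hw0, hw1⟩, hw⟩ := ih
      (Matrix.of fun i j : Fin (n + 1) =>
        A i.succ j.succ - A i.succ 0 * A 0 j.succ / (A 0 0 + ε))
      (by
        intro i j hij
        have h1 := hZ i.succ j.succ (fun h => hij (Fin.succ_injective _ h))
        have h2 : 0 ≤ A i.succ 0 * A 0 j.succ / (A 0 0 + ε) :=
          div_nonneg (mul_nonneg_of_nonpos_of_nonpos (hs0 i) (h0s j)) hp.le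
        simp only [Matrix.of_apply]
        linarith)
      (by
        intro k e he
        have he' : Function.Injective
            (Fin.cons 0 (fun i => (e i).succ) : Fin (k + 1) → Fin (n + 1 + 1)) := by
          rw [Fin.cons_injective_iff]
          refine ⟨?_, (Fin.succ_injective _).comp he⟩
          rintro ⟨i, hi⟩
          exact Fin.succ_ne_zero _ hi
        have h1 := hP (k + 1) _ he'
        have h2 := hP k (fun i => (e i).succ) ((Fin.succ_injective _).comp he)
        have h3 := det_schur_perturbed
          (A.submatrix (Fin.cons 0 (fun i => (e i).succ) : Fin (k + 1) → Fin (n + 1 + 1))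
            (Fin.cons 0 (fun i => (e i).succ))) ε (by simpa using hp.ne')
        simp only [Matrix.submatrix_apply, Fin.cons_zero, Fin.cons_succ,
          Matrix.submatrix_submatrix] at h3
        refine (mul_nonneg_iff_of_pos_left hp).1 ?_
        refine le_of_le_of_eq (add_nonneg h1 (mul_nonneg hε.le h2)) ?_
        exact h3.symm)
    -- Solve the first row of `(A + ε) u = 0` for the first coordinate.
    set t : ℝ := -(∑ j, A 0 (Fin.succ j) * w j) / (A 0 0 + ε) with ht
    have ht0 : 0 ≤ t := by
      refine div_nonneg ?_ hp.le
      rw [neg_nonneg]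
      exact Finset.sum_nonpos fun j _ => mul_nonpos_of_nonpos_of_nonneg (h0s j) (hw0 j)
    have htp : t * (A 0 0 + ε) = -(∑ j, A 0 (Fin.succ j) * w j) := by
      rw [ht]; field_simp
    have h1t : 0 < 1 + t := by linarith
    have hu : ∀ i, 0 ≤ (∑ j, A i j * (Fin.cons t w : Fin (n + 2) → ℝ) j)
        + ε * (Fin.cons t w : Fin (n + 2) → ℝ) i := by
      intro i
      rw [Fin.sum_univ_succ]
      refine Fin.cases ?_ (fun i => ?_) i
      · simp only [Fin.cons_zero, Fin.cons_succ]
        linarith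
      · simp only [Fin.cons_zero, Fin.cons_succ]
        refine le_of_le_of_eq (hw i) ?_
        have : ∑ j, A i.succ 0 * A 0 (Fin.succ j) / (A 0 0 + ε) * w j = - (A i.succ 0 * t) := by
          rw [ht, neg_div, mul_neg, neg_neg, Finset.sum_div, Finset.mul_sum]
          exact Finset.sum_congr rfl fun j _ => by ring
        simp only [Matrix.of_apply, sub_mul, Finset.sum_sub_distrib]
        rw [this]
        ring
    refine ⟨fun i => (1 + t)⁻¹ * (Fin.cons t w : Fin (n + 2) → ℝ) i, ⟨?_, ?_⟩, ?_⟩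
    · intro i
      refine mul_nonneg (inv_nonneg.2 h1t.le) ?_
      refine Fin.cases ?_ (fun i => ?_) i
      · simpa using ht0
      · simpa using hw0 i
    · rw [← Finset.mul_sum, Fin.sum_univ_succ]
      simp only [Fin.cons_zero, Fin.cons_succ, hw1]
      field_simp
      ring
    · intro i
      have h := mul_nonneg (inv_nonneg.2 h1t.le) (hu i)
      refine le_of_le_of_eq h ?_
      rw [mul_add, Finset.mul_sum]
      congr 1
      · exact Finset.sum_congr rfl fun j _ => by ring
      · ring

/-- An irreducible M-matrix maps some positive vector to a nonnegative one. -/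
lemma exists_pos_mulVec_nonneg {n : ℕ} (hn : 1 ≤ n) (A : Matrix (Fin n) (Fin n) ℝ)
    (hA : IsMMatrix A) (hirr : ¬ IsReducible A) :
    ∃ d : Fin n → ℝ, (∀ i, 0 < d i) ∧ ∀ i, 0 ≤ ∑ j, A i j * d j := by
  obtain ⟨hZ, hmin⟩ := hA
  have hP : ∀ (k : ℕ) (e : Fin k → Fin n), Function.Injective e →
      0 ≤ (A.submatrix e e).det := by
    intro k e he
    have h := hmin (Finset.univ.map ⟨e, he⟩)
    let E : Fin k ≃ (Finset.univ.map ⟨e, he⟩ : Finset (Fin n)) :=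
      Equiv.ofBijective (fun i => ⟨e i, by simp⟩)
        ⟨fun i j hij => he (congrArg Subtype.val hij), by
          rintro ⟨y, hy⟩
          obtain ⟨i, -, hi⟩ := Finset.mem_map.1 hy
          exact ⟨i, Subtype.ext hi⟩⟩
    rw [← Matrix.det_submatrix_equiv_self E] at h
    exact h
  obtain ⟨n, rfl⟩ : ∃ k, n = k + 1 := ⟨n - 1, by omega⟩
  choose v hv hvA using fun k : ℕ =>
    exists_simplex_perturbed n A hZ hP (1 / ((k : ℝ) + 1)) (by positivity)
  obtain ⟨d, hd, φ, hφ, hlim⟩ := (isCompact_stdSimplex ℝ (Fin (n + 1))).tendsto_subseq hv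
  have hAd : ∀ i, 0 ≤ ∑ j, A i j * d j := by
    intro i
    have hc : ∀ j, Tendsto (fun k => v (φ k) j) atTop (𝓝 (d j)) :=
      fun j => (tendsto_pi_nhds.1 hlim) j
    have hε : Tendsto (fun k => 1 / ((φ k : ℝ) + 1)) atTop (𝓝 0) :=
      (tendsto_one_div_add_atTop_nhds_zero_nat (𝕜 := ℝ)).comp hφ.tendsto_atTop
    have h : Tendsto (fun k => (∑ j, A i j * v (φ k) j) + 1 / ((φ k : ℝ) + 1) * v (φ k) i)
        atTop (𝓝 ((∑ j, A i j * d j) + 0 * d i)) :=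
      (tendsto_finsetSum _ fun j _ => (hc j).const_mul _).add (hε.mul (hc i))
    rw [zero_mul, add_zero] at h
    exact ge_of_tendsto' h fun k => hvA (φ k) i
  refine ⟨d, ?_, hAd⟩
  by_contra hcon
  push Not at hcon
  obtain ⟨i₀, hi₀⟩ := hcon
  -- The zero set of `d` would reduce `A`.
  refine hirr (Or.inr ⟨Finset.univ.filter fun i => d i = 0,
    ⟨i₀, by simpa using le_antisymm hi₀ (hd.1 i₀)⟩, ?_, ?_⟩)
  · intro hall
    have h0 : ∀ i, d i = 0 := fun i => by
      have : i ∈ Finset.univ.filter fun i => d i = 0 := by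
        rw [hall]; exact Finset.mem_univ i
      simpa using this
    have := hd.2
    simp [h0] at this
  · intro i hi j hj
    have hi : d i = 0 := by simpa using hi
    have hj : d j ≠ 0 := by simpa using hj
    have hle : ∀ k ∈ Finset.univ, A i k * d k ≤ 0 := by
      intro k _
      by_cases hk : i = k
      · rw [← hk, hi, mul_zero]
      · exact mul_nonpos_of_nonpos_of_nonneg (hZ i k hk) (hd.1 k)
    have hsum := le_antisymm (Finset.sum_nonpos hle) (hAd i)
    have := (Finset.sum_eq_zero_iff_of_nonpos hle).1 hsum j (Finset.mem_univ j)
    exact (mul_eq_zero.1 this).resolve_right hj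

/-- The strict bound off `0` gives the weak bound everywhere, because continuity
forces the value `0` at `0`. -/
lemma abs_le_of_strict {h : ℝ → ℝ} {L : ℝ} (hc : Continuous h)
    (hb : ∀ u : ℝ, u ≠ 0 → |h u| < L * |u|) (u : ℝ) : |h u| ≤ L * |u| := by
  have hcl : IsClosed {u : ℝ | |h u| ≤ L * |u|} :=
    isClosed_le hc.abs (continuous_const.mul continuous_abs)
  have hd : Dense {u : ℝ | |h u| ≤ L * |u|} :=
    (dense_compl_singleton (0 : ℝ)).mono fun u hu => (hb u hu).le
  have : u ∈ closure {u : ℝ | |h u| ≤ L * |u|} := hd u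
  rwa [hcl.closure_eq] at this

/-- Lemma 3.1, item ii: under (H1)-(H5), (H6*), if the matrix `M⁺` is a singular
irreducible M-matrix, then every solution of model (1) with bounded initial condition
is bounded on `ℤ`. -/
theorem solutions_bounded_H6star_Mplus_singular_irreducible
    (n P : ℕ) (hn : 1 ≤ n) (hP : 1 ≤ P)
    (a : Fin n → ℕ → ℝ) (ν : Fin n → ℕ → ℕ)
    (b : Fin n → Fin n → Fin P → ℕ → ℝ)
    (τ : Fin n → Fin n → Fin P → ℕ → ℕ)
    (c : Fin n → Fin n → ℕ → ℝ)
    (ζ : Fin n → Fin n → ℕ → ℝ)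
    (I : Fin n → ℕ → ℝ)
    (f : Fin n → Fin n → Fin P → ℝ → ℝ)
    (g : Fin n → Fin n → ℝ → ℝ)
    (F : Fin n → Fin n → Fin P → ℝ)
    (G : Fin n → Fin n → ℝ)
    (σ : ℕ) (x : ℤ → Fin n → ℝ)
    -- `x` has bounded initial condition: it is bounded on `(-∞, σ] ∩ ℤ`
    (hinit : ∃ B : ℝ, ∀ m : ℤ, m ≤ (σ : ℤ) → ‖x m‖ ≤ B)
    -- the inner series converge absolutely
    (habs : ∀ (i j : Fin n) (m : ℤ), Summable fun l : ℕ => |ζ i j l * g i j (x (m - l) j)|)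
    -- `x` is a solution of model (1) from the initial time `σ` on
    (hmodel : ∀ m : ℕ, σ ≤ m → ∀ i : Fin n,
      x ((m : ℤ) + 1) i =
        a i m * x ((m : ℤ) - ν i m) i
        + ∑ j, ∑ p, b i j p m * f i j p (x ((m : ℤ) - τ i j p m) j)
        + ∑ j, c i j m * ∑' l : ℕ, ζ i j l * g i j (x ((m : ℤ) - l) j)
        + I i m)
    -- (H1)
    (hH1 : ∀ i, BddAbove (Set.range fun m : ℕ => |a i m|) ∧ (⨆ m : ℕ, |a i m|) < 1)
    -- (H2)
    (hH2ν : ∀ i, Filter.Tendsto (fun m : ℕ => (m : ℤ) - ν i m) Filter.atTop Filter.atTop)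
    (hH2τ : ∀ i j p,
      Filter.Tendsto (fun m : ℕ => (m : ℤ) - τ i j p m) Filter.atTop Filter.atTop)
    -- (H3)
    (hH3b : ∀ i j p, BddAbove (Set.range fun m : ℕ => |b i j p m|))
    (hH3c : ∀ i j, BddAbove (Set.range fun m : ℕ => |c i j m|))
    -- (H4)
    (hH4 : ∀ i j, ∑' l : ℕ, |ζ i j l| = 1)
    -- (H5)
    (hH5 : ∀ i, Summable fun m : ℕ => |I i m|)
    -- (H6*)
    (hH6f : ∀ i j p, Continuous (f i j p) ∧ 0 < F i j p ∧
      ∀ u : ℝ, u ≠ 0 → |f i j p u| < F i j p * |u|)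
    (hH6g : ∀ i j, Continuous (g i j) ∧ 0 < G i j ∧
      ∀ u : ℝ, u ≠ 0 → |g i j u| < G i j * |u|)
    -- `M⁺` is a singular irreducible M-matrix
    (hM : IsMMatrix (Matrix.of fun i j : Fin n =>
        (if i = j then 1 - (⨆ m : ℕ, |a i m|) else 0)
        - ((⨆ m : ℕ, |c i j m|) * G i j + ∑ p, (⨆ m : ℕ, |b i j p m|) * F i j p)))
    (hMsing : (Matrix.of fun i j : Fin n =>
        (if i = j then 1 - (⨆ m : ℕ, |a i m|) else 0)
        - ((⨆ m : ℕ, |c i j m|) * G i j + ∑ p, (⨆ m : ℕ, |b i j p m|) * F i j p)).det = 0)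
    (hMirr : ¬ IsReducible (Matrix.of fun i j : Fin n =>
        (if i = j then 1 - (⨆ m : ℕ, |a i m|) else 0)
        - ((⨆ m : ℕ, |c i j m|) * G i j + ∑ p, (⨆ m : ℕ, |b i j p m|) * F i j p)))
    :
    ∃ B : ℝ, ∀ m : ℤ, ‖x m‖ ≤ B := by
  obtain ⟨d, hd, hAd⟩ := exists_pos_mulVec_nonneg hn _ hM hMirr
  obtain ⟨B, hB⟩ := hinit
  have hB0 : 0 ≤ B := (norm_nonneg _).trans (hB σ le_rfl)
  have hrow : ∀ i, (⨆ m : ℕ, |a i m|) * d i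
      + ∑ j, ∑ p, (⨆ m : ℕ, |b i j p m|) * (F i j p * d j)
      + ∑ j, (⨆ m : ℕ, |c i j m|) * (G i j * d j) ≤ d i := by
    intro i
    have h := hAd i
    simp only [Matrix.of_apply, sub_mul, add_mul, ite_mul, zero_mul, one_mul,
      Finset.sum_sub_distrib, Finset.sum_add_distrib, Finset.sum_ite_eq, Finset.mem_univ,
      if_true, Finset.sum_mul, mul_assoc] at h
    linarith
  set J : ℕ → ℝ := fun m => ∑ i, |I i m| / d i with hJ
  have hJ0 : ∀ m, 0 ≤ J m := fun m =>
    Finset.sum_nonneg fun i _ => div_nonneg (abs_nonneg _) (hd i).le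
  have hJs : Summable J := summable_sum fun i _ => (hH5 i).div_const _
  have hJi : ∀ i m, |I i m| ≤ d i * J m := by
    intro i m
    have h : |I i m| / d i ≤ J m :=
      Finset.single_le_sum (f := fun i => |I i m| / d i)
        (fun i _ => div_nonneg (abs_nonneg _) (hd i).le) (Finset.mem_univ i)
    rw [div_le_iff₀ (hd i)] at h
    linarith
  set K : ℝ := ∑ i, B / d i with hK
  have hK0 : 0 ≤ K := Finset.sum_nonneg fun i _ => div_nonneg hB0 (hd i).le
  have hKi : ∀ i, B ≤ d i * K := by
    intro i
    have h : B / d i ≤ K :=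
      Finset.single_le_sum (f := fun i => B / d i)
        (fun i _ => div_nonneg hB0 (hd i).le) (Finset.mem_univ i)
    rw [div_le_iff₀ (hd i)] at h
    linarith
  have key : ∀ k : ℕ, ∀ m : ℤ, m ≤ ((σ + k : ℕ) : ℤ) → ∀ i,
      |x m i| ≤ d i * (K + ∑ t ∈ Finset.range (σ + k), J t) := by
    intro k
    induction k with
    | zero =>
      intro m hm i
      have h1 : |x m i| ≤ B := (norm_le_pi_norm (x m) i).trans (hB m (by simpa using hm))
      have h2 : 0 ≤ ∑ t ∈ Finset.range (σ + 0), J t := Finset.sum_nonneg fun t _ => hJ0 t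
      have h3 := mul_nonneg (hd i).le h2
      have := hKi i
      rw [mul_add]
      linarith
    | succ k ih =>
      intro m hm i
      rw [← add_assoc, Finset.sum_range_succ]
      set Z : ℝ := K + ∑ t ∈ Finset.range (σ + k), J t with hZ
      have hZ0 : 0 ≤ Z := add_nonneg hK0 (Finset.sum_nonneg fun t _ => hJ0 t)
      rw [← add_assoc, ← hZ]
      rcases le_or_gt m ((σ + k : ℕ) : ℤ) with hm' | hm'
      · refine (ih m hm' i).trans ?_
        have := hJ0 (σ + k)
        gcongr
        · exact (hd i).le
        · linarith
      · obtain rfl : m = ((σ + k : ℕ) : ℤ) + 1 := by push_cast at *; omega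
        set q := σ + k with hq
        rw [hmodel q (by omega) i]
        have hx : ∀ (l : ℕ) j, |x ((q : ℤ) - l) j| ≤ d j * Z := fun l j => ih _ (by omega) j
        have ha : |a i q * x ((q : ℤ) - ν i q) i| ≤ (⨆ m : ℕ, |a i m|) * d i * Z := by
          have h1 : |a i q| ≤ ⨆ m : ℕ, |a i m| := le_ciSup (hH1 i).1 q
          rw [abs_mul, mul_assoc]
          exact mul_le_mul h1 (hx _ i) (abs_nonneg _) ((abs_nonneg _).trans h1)
        have hb : |∑ j, ∑ p, b i j p q * f i j p (x ((q : ℤ) - τ i j p q) j)|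
            ≤ (∑ j, ∑ p, (⨆ m : ℕ, |b i j p m|) * (F i j p * d j)) * Z := by
          rw [Finset.sum_mul]
          refine (Finset.abs_sum_le_sum_abs _ _).trans (Finset.sum_le_sum fun j _ => ?_)
          rw [Finset.sum_mul]
          refine (Finset.abs_sum_le_sum_abs _ _).trans (Finset.sum_le_sum fun p _ => ?_)
          have h1 : |b i j p q| ≤ ⨆ m : ℕ, |b i j p m| := le_ciSup (hH3b i j p) q
          obtain ⟨hc, hF, hs⟩ := hH6f i j p
          rw [abs_mul, mul_assoc, mul_assoc]
          exact mul_le_mul h1 ((abs_le_of_strict hc hs _).trans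
            (mul_le_mul_of_nonneg_left (hx _ j) hF.le)) (abs_nonneg _) ((abs_nonneg _).trans h1)
        have hc : |∑ j, c i j q * ∑' l : ℕ, ζ i j l * g i j (x ((q : ℤ) - l) j)|
            ≤ (∑ j, (⨆ m : ℕ, |c i j m|) * (G i j * d j)) * Z := by
          rw [Finset.sum_mul]
          refine (Finset.abs_sum_le_sum_abs _ _).trans (Finset.sum_le_sum fun j _ => ?_)
          have h1 : |c i j q| ≤ ⨆ m : ℕ, |c i j m| := le_ciSup (hH3c i j) q
          obtain ⟨hc, hG, hs⟩ := hH6g i j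
          -- A divergent series would have sum `0`, not `1`.
          have hζ : Summable fun l => |ζ i j l| := by
            by_contra hns
            have := hH4 i j
            rw [tsum_eq_zero_of_not_summable hns] at this
            exact zero_ne_one this
          have h2 : |∑' l : ℕ, ζ i j l * g i j (x ((q : ℤ) - l) j)| ≤ G i j * (d j * Z) := by
            have hsum : HasSum (fun l => |ζ i j l| * (G i j * (d j * Z))) (G i j * (d j * Z)) := by
              have := (hζ.hasSum.mul_right (G i j * (d j * Z)))
              rwa [hH4, one_mul] at this
            rw [← Real.norm_eq_abs]
            refine tsum_of_norm_bounded hsum fun l => ?_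
            rw [Real.norm_eq_abs, abs_mul]
            exact mul_le_mul_of_nonneg_left ((abs_le_of_strict hc hs _).trans
              (mul_le_mul_of_nonneg_left (hx l j) hG.le)) (abs_nonneg _)
          rw [abs_mul, mul_assoc, mul_assoc]
          exact mul_le_mul h1 h2 (abs_nonneg _) ((abs_nonneg _).trans h1)
        have hr := mul_le_mul_of_nonneg_right (hrow i) hZ0
        have hI := hJi i q
        refine (abs_add_le _ _).trans ?_
        refine (add_le_add_left ((abs_add_le _ _).trans
          (add_le_add_left (abs_add_le _ _) _)) _).trans ?_
        rw [add_mul, add_mul] at hr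
        rw [mul_add]
        linarith
  -- Partial sums of the inputs are at most the full sum, so the estimate is uniform in `k`.
  have hT0 : 0 ≤ K + ∑' t, J t := add_nonneg hK0 (tsum_nonneg hJ0)
  refine ⟨∑ i, d i * (K + ∑' t, J t), fun m => ?_⟩
  have hall : ∀ i, 0 ≤ d i * (K + ∑' t, J t) := fun i => mul_nonneg (hd i).le hT0
  refine (pi_norm_le_iff_of_nonneg (Finset.sum_nonneg fun i _ => hall i)).2 fun i => ?_
  refine ((key m.toNat m (by push_cast; omega) i).trans ?_).trans
    (Finset.single_le_sum (f := fun i => d i * (K + ∑' t, J t))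
      (fun i _ => hall i) (Finset.mem_univ i))
  exact mul_le_mul_of_nonneg_left
    (add_le_add_right (hJs.sum_le_tsum _ fun t _ => hJ0 t) _) (hd i).le
end
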